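/- arXiv:1111.5159 — 3 statements merged into one kernel-verified Lean document; each statement's English description precedes it below -/
import Mathlib

section
/- There exists an absolute constant K such that the following holds. Let f : ℝ → ℝ be continuous and strictly convex, and let A, B, C ⊂ ℝ be finite nonempty sets with |B||C| ≥ |A|^2. Then for every real τ ≥ 1, the number of elements x with σ_{f(A),C}(x) ≥ τ is at most K · |A+B|^2 |C|^2 / (|B| τ^3). -/
open Finset Pointwise

noncomputable def dlt (X Y : Finset ℝ) (s : ℝ) : ℕ :=
  ((X ×ˢ Y).filter (fun p => p.1 - p.2 = s)).card

noncomputable def sg (X Y : Finset ℝ) (s : ℝ) : ℕ :=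
  ((X ×ˢ Y).filter (fun p => p.1 + p.2 = s)).card

noncomputable def En (X Y : Finset ℝ) : ℝ :=
  ∑ s ∈ X - X, (dlt X X s : ℝ) * (dlt Y Y s : ℝ)

noncomputable def E3 (X : Finset ℝ) : ℝ :=
  ∑ s ∈ X - X, (dlt X X s : ℝ) ^ 3

noncomputable def E15 (X : Finset ℝ) : ℝ :=
  ∑ s ∈ X - X, (dlt X X s : ℝ) ^ ((3 : ℝ) / 2)

/-- A strictly convex function has distinct increments of the same length. -/
lemma StrictConvexOn.eq_of_sub_eq_sub {f : ℝ → ℝ} (hf : StrictConvexOn ℝ Set.univ f)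
    {a a' c c' : ℝ} (ha : a < a') (hsub : a' - a = c' - c) (hfsub : f a' - f a = f c' - f c) :
    a = c := by
  have increment_lt : ∀ u v h : ℝ, 0 < h → u < v → f (u + h) - f u < f (v + h) - f v := by
    intro u v h hh huv
    have hd : 0 < v + h - u := by linarith
    have hs : 0 < (v - u) / (v + h - u) := div_pos (by linarith) hd
    have ht : 0 < h / (v + h - u) := div_pos hh hd
    have hst : (v - u) / (v + h - u) + h / (v + h - u) = 1 := by field_simp; ring
    have h₁ := hf.2 (Set.mem_univ u) (Set.mem_univ (v + h)) (by linarith) hs ht hst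
    have h₂ := hf.2 (Set.mem_univ u) (Set.mem_univ (v + h)) (by linarith) ht hs
      (by rw [add_comm, hst])
    simp only [smul_eq_mul] at h₁ h₂
    have e₁ : (v - u) / (v + h - u) * u + h / (v + h - u) * (v + h) = u + h := by
      field_simp; ring
    have e₂ : h / (v + h - u) * u + (v - u) / (v + h - u) * (v + h) = v := by
      field_simp; ring
    rw [e₁] at h₁
    rw [e₂] at h₂
    have hsum : (v - u) / (v + h - u) * f u + h / (v + h - u) * f (v + h)
        + (h / (v + h - u) * f u + (v - u) / (v + h - u) * f (v + h))
        = ((v - u) / (v + h - u) + h / (v + h - u)) * (f u + f (v + h)) := by ring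
    rw [hst, one_mul] at hsum
    linarith
  have ea : a' = a + (a' - a) := by ring
  have ec : c' = c + (a' - a) := by rw [hsub]; ring
  rcases lt_trichotomy a c with h | h | h
  · have := increment_lt a c (a' - a) (by linarith) h
    rw [← ea, ← ec] at this
    linarith
  · exact h
  · have := increment_lt c a (a' - a) (by linarith) h
    rw [← ea, ← ec] at this
    linarith

/-- A sequence of naturals increasing up to at most `M` in `n` steps has at most `n / 4` jumps
exceeding `4 * M / n`. -/
lemma card_large_jumps_le {u : ℕ → ℕ} {n M : ℕ} (hu : ∀ i < n, u i ≤ u (i + 1)) (hM : u n ≤ M) :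
    4 * ((range n).filter fun i => 4 * M < n * (u (i + 1) - u i)).card ≤ n := by
  set J := (range n).filter fun i => 4 * M < n * (u (i + 1) - u i)
  have telescope : ∀ m ≤ n, (∑ i ∈ range m, (u (i + 1) - u i)) + u 0 = u m := by
    intro m
    induction m with
    | zero => simp
    | succ k ih =>
      intro hk
      have h₁ := ih (by omega)
      have h₂ := hu k (by omega)
      rw [sum_range_succ]
      omega
  have h : J.card * (4 * M + 1) ≤ n * M := by
    calc J.card * (4 * M + 1) ≤ ∑ i ∈ J, n * (u (i + 1) - u i) := by
          rw [← smul_eq_mul]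
          exact card_nsmul_le_sum _ _ _ fun i hi => (mem_filter.1 hi).2
      _ ≤ ∑ i ∈ range n, n * (u (i + 1) - u i) :=
          sum_le_sum_of_subset (filter_subset _ _)
      _ = n * ∑ i ∈ range n, (u (i + 1) - u i) := by rw [mul_sum]
      _ ≤ n * M := Nat.mul_le_mul_left _ (by have := telescope n le_rfl; omega)
  by_contra! hlt
  nlinarith [Nat.mul_le_mul_right M (Nat.succ_le_of_lt hlt)]

/-- Many pairs of elements of a finite set are close with respect to two given bounded monotone
functions simultaneously. -/
lemma le_two_mul_card_close_pairs {S : Finset ℝ} {n P Q : ℕ} (hS : n + 1 ≤ S.card) {p q : ℝ → ℕ}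
    (hp : MonotoneOn p S) (hq : MonotoneOn q S) (hP : ∀ a, p a ≤ P) (hQ : ∀ a, q a ≤ Q) :
    n ≤ 2 * ((S ×ˢ S).filter fun z => z.1 < z.2 ∧ n * (p z.2 - p z.1) ≤ 4 * P ∧
      n * (q z.2 - q z.1) ≤ 4 * Q).card := by
  obtain ⟨s, hsS, hs⟩ : ∃ s : ℕ → ℝ, (∀ i ≤ n, s i ∈ S) ∧ ∀ i j, i < j → j ≤ n → s i < s j := by
    refine ⟨fun i => if h : i < S.card then S.orderEmbOfFin rfl ⟨i, h⟩ else 0, ?_, ?_⟩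
    · intro i hi
      simp [show i < S.card by omega]
    · intro i j hij hj
      simp [show i < S.card by omega, show j < S.card by omega, hij]
  have mono : ∀ r : ℝ → ℕ, MonotoneOn r S → ∀ i < n, r (s i) ≤ r (s (i + 1)) :=
    fun r hr i hi => hr (hsS i hi.le) (hsS _ hi) (hs _ _ i.lt_succ_self hi).le
  have hJp := card_large_jumps_le (u := fun i => p (s i)) (mono p hp) (hP _)
  have hJq := card_large_jumps_le (u := fun i => q (s i)) (mono q hq) (hQ _)
  set Jp := (range n).filter fun i => 4 * P < n * (p (s (i + 1)) - p (s i))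
  set Jq := (range n).filter fun i => 4 * Q < n * (q (s (i + 1)) - q (s i))
  have hgood : (range n \ (Jp ∪ Jq)).card ≤ ((S ×ˢ S).filter fun z => z.1 < z.2 ∧
      n * (p z.2 - p z.1) ≤ 4 * P ∧ n * (q z.2 - q z.1) ≤ 4 * Q).card := by
    refine card_le_card_of_injOn (fun i => (s i, s (i + 1))) ?_ ?_
    · intro i hi
      simp only [Jp, Jq, coe_sdiff, Set.mem_sdiff, mem_coe, mem_union, mem_filter, mem_range,
        not_or, not_and, not_lt] at hi
      obtain ⟨hin, h₁, h₂⟩ := hi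
      simp only [mem_coe, mem_filter, mem_product]
      exact ⟨⟨hsS i hin.le, hsS _ hin⟩, hs _ _ i.lt_succ_self hin, h₁ hin, h₂ hin⟩
    · intro i hi j hj hij
      have hin := mem_range.1 (mem_sdiff.1 (mem_coe.1 hi)).1
      have hjn := mem_range.1 (mem_sdiff.1 (mem_coe.1 hj)).1
      have hij' : s i = s j := congrArg Prod.fst hij
      rcases lt_trichotomy i j with h | h | h
      · exact absurd hij' (hs i j h hjn.le).ne
      · exact h
      · exact absurd hij' (hs j i h hin.le).ne'
  have h₁ := le_card_sdiff (Jp ∪ Jq) (range n)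
  have h₂ := card_union_le Jp Jq
  rw [card_range] at h₁
  omega

/-- The number of elements of `D` below `d`. -/
noncomputable def Finset.rankBelow (D : Finset ℝ) (d : ℝ) : ℕ :=
  (D.filter fun e => e < d).card

lemma Finset.rankBelow_le (D : Finset ℝ) (d : ℝ) : D.rankBelow d ≤ D.card :=
  card_filter_le _ _

lemma Finset.rankBelow_mono (D : Finset ℝ) : Monotone D.rankBelow := fun _ _ h =>
  card_le_card fun _ he => mem_filter.2 ⟨(mem_filter.1 he).1, (mem_filter.1 he).2.trans_le h⟩

lemma Finset.rankBelow_strictMonoOn (D : Finset ℝ) : StrictMonoOn D.rankBelow D := by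
  intro d hd d' _ h
  refine card_lt_card (Finset.ssubset_iff_of_subset ?_ |>.2 ⟨d, ?_, ?_⟩)
  · exact fun _ he => mem_filter.2 ⟨(mem_filter.1 he).1, (mem_filter.1 he).2.trans h⟩
  · exact mem_filter.2 ⟨hd, h⟩
  · simp

/-- The increasing pairs in `D` whose ranks differ by at most `4 * #D / n`. -/
noncomputable def Finset.closePairs (D : Finset ℝ) (n : ℕ) : Finset (ℝ × ℝ) :=
  (D ×ˢ D).filter fun z => z.1 < z.2 ∧ n * (D.rankBelow z.2 - D.rankBelow z.1) ≤ 4 * D.card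

lemma Finset.card_closePairs_mul_le (D : Finset ℝ) {n : ℕ} (hn : 0 < n) :
    (D.closePairs n).card * n ≤ 4 * D.card ^ 2 := by
  have hfiber : ∀ d ∈ D, ((D.closePairs n).filter fun z => z.1 = d).card ≤ 4 * D.card / n := by
    intro d hd
    have : ((D.closePairs n).filter fun z => z.1 = d).card ≤
        (Ioc (D.rankBelow d) (D.rankBelow d + 4 * D.card / n)).card := by
      refine card_le_card_of_injOn (fun z => D.rankBelow z.2) ?_ ?_
      · rintro ⟨_, e⟩ hz
        simp only [closePairs, mem_coe, mem_filter, mem_product] at hz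
        obtain ⟨⟨⟨_, he⟩, hlt, hle⟩, rfl⟩ := hz
        have h₁ := D.rankBelow_strictMonoOn hd he hlt
        have h₂ := (Nat.le_div_iff_mul_le hn).2 ((mul_comm _ _).trans_le hle)
        simp only [mem_coe, mem_Ioc]
        omega
      · rintro ⟨_, e⟩ hz ⟨_, e'⟩ hz' h
        simp only [closePairs, mem_coe, mem_filter, mem_product] at hz hz'
        rw [hz.2, hz'.2, D.rankBelow_strictMonoOn.injOn hz.1.1.2 hz'.1.1.2 h]
    simpa using this
  have hcard := card_le_mul_card_image_of_maps_to (s := D.closePairs n) (t := D) (f := Prod.fst)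
    (fun z hz => (mem_product.1 (mem_filter.1 hz).1).1) _ hfiber
  calc (D.closePairs n).card * n ≤ 4 * D.card / n * D.card * n := Nat.mul_le_mul_right _ hcard
    _ = 4 * D.card / n * n * D.card := by ring
    _ ≤ 4 * D.card * D.card := Nat.mul_le_mul_right _ (Nat.div_mul_le_self _ _)
    _ = 4 * D.card ^ 2 := by ring

lemma card_rich_mul_le_of_strictAntiOn {f : ℝ → ℝ} (hf : StrictConvexOn ℝ Set.univ f)
    {A B C X : Finset ℝ} (hA : StrictAntiOn f A) {n : ℕ} (hn : 0 < n)
    (hX : ∀ x ∈ X, n + 1 ≤ (A.filter fun a => x - f a ∈ C).card) :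
    X.card * B.card * n ^ 3 ≤ 32 * (A + B).card ^ 2 * C.card ^ 2 := by
  set D := A + B
  let S : ℝ → Finset ℝ := fun x => A.filter fun a => x - f a ∈ C
  let G : ℝ × ℝ → Finset (ℝ × ℝ) := fun y => (S y.1 ×ˢ S y.1).filter fun z => z.1 < z.2 ∧
    n * (D.rankBelow (z.2 + y.2) - D.rankBelow (z.1 + y.2)) ≤ 4 * D.card ∧
    n * (C.rankBelow (y.1 - f z.2) - C.rankBelow (y.1 - f z.1)) ≤ 4 * C.card
  have hG : ∀ y ∈ X ×ˢ B, n ≤ 2 * (G y).card := by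
    intro y hy
    refine le_two_mul_card_close_pairs (hX _ (mem_product.1 hy).1)
      (p := fun a => D.rankBelow (a + y.2)) (q := fun a => C.rankBelow (y.1 - f a)) ?_ ?_
      (fun _ => D.rankBelow_le _) (fun _ => C.rankBelow_le _)
    · exact fun a _ a' _ h => D.rankBelow_mono (by linarith)
    · intro a ha a' ha' h
      have := hA.antitoneOn (mem_coe.2 (mem_filter.1 (mem_coe.1 ha)).1)
        (mem_coe.2 (mem_filter.1 (mem_coe.1 ha')).1) h
      exact C.rankBelow_mono (by linarith)
  have hsigma : X.card * B.card * n ≤ 2 * ((X ×ˢ B).sigma G).card := by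
    rw [card_sigma, mul_sum, ← card_product, ← smul_eq_mul]
    exact card_nsmul_le_sum _ _ _ hG
  have hinj : ((X ×ˢ B).sigma G).card ≤ (D.closePairs n ×ˢ C.closePairs n).card := by
    refine card_le_card_of_injOn (fun w => ((w.2.1 + w.1.2, w.2.2 + w.1.2),
      (w.1.1 - f w.2.1, w.1.1 - f w.2.2))) ?_ ?_
    · rintro ⟨⟨x, b⟩, ⟨a, a'⟩⟩ hw
      simp only [G, S, mem_coe, mem_sigma, mem_product, mem_filter] at hw
      obtain ⟨⟨_, hb⟩, ⟨⟨ha, hac⟩, ⟨ha', hac'⟩⟩, hlt, hD, hC⟩ := hw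
      simp only [closePairs, mem_coe, mem_product, mem_filter]
      have := hA ha ha' hlt
      exact ⟨⟨⟨add_mem_add ha hb, add_mem_add ha' hb⟩, by linarith, hD⟩,
        ⟨hac, hac'⟩, by linarith, hC⟩
    · rintro ⟨⟨x, b⟩, ⟨a, a'⟩⟩ hw ⟨⟨y, c⟩, ⟨e, e'⟩⟩ _ h
      simp only [G, mem_coe, mem_sigma, mem_filter] at hw
      simp only [Prod.mk.injEq] at h
      obtain ⟨⟨h₁, h₂⟩, h₃, h₄⟩ := h
      obtain rfl : a = e := hf.eq_of_sub_eq_sub (c' := e') hw.2.2.1 (by linarith) (by linarith)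
      obtain rfl : b = c := by linarith
      obtain rfl : a' = e' := by linarith
      obtain rfl : x = y := by linarith
      rfl
  rw [card_product] at hinj
  calc X.card * B.card * n ^ 3 = X.card * B.card * n * n ^ 2 := by ring
    _ ≤ 2 * ((D.closePairs n).card * (C.closePairs n).card) * n ^ 2 := Nat.mul_le_mul_right _
        (hsigma.trans (Nat.mul_le_mul_left _ hinj))
    _ = 2 * (((D.closePairs n).card * n) * ((C.closePairs n).card * n)) := by ring
    _ ≤ 2 * ((4 * D.card ^ 2) * (4 * C.card ^ 2)) := by
      exact Nat.mul_le_mul_left _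
        (Nat.mul_le_mul (D.card_closePairs_mul_le hn) (C.card_closePairs_mul_le hn))
    _ = 32 * D.card ^ 2 * C.card ^ 2 := by ring

lemma StrictConvexOn.comp_neg_univ {f : ℝ → ℝ} (hf : StrictConvexOn ℝ Set.univ f) :
    StrictConvexOn ℝ Set.univ fun x => f (-x) := by
  refine ⟨convex_univ, fun x _ y _ hxy s t hs ht hst => ?_⟩
  have := hf.2 (Set.mem_univ (-x)) (Set.mem_univ (-y)) (by simpa using hxy) hs ht hst
  simpa [neg_add, add_comm] using this

lemma card_rich_mul_le_of_strictMonoOn {f : ℝ → ℝ} (hf : StrictConvexOn ℝ Set.univ f)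
    {A B C X : Finset ℝ} (hA : StrictMonoOn f A) {n : ℕ} (hn : 0 < n)
    (hX : ∀ x ∈ X, n + 1 ≤ (A.filter fun a => x - f a ∈ C).card) :
    X.card * B.card * n ^ 3 ≤ 32 * (A + B).card ^ 2 * C.card ^ 2 := by
  have h := card_rich_mul_le_of_strictAntiOn (A := -A) (B := -B) (C := C) (X := X)
    hf.comp_neg_univ ?_ hn ?_
  · rwa [← neg_add, card_neg, card_neg] at h
  · intro a ha a' ha' hlt
    exact hA (by simpa using ha') (by simpa using ha) (neg_lt_neg hlt)
  · intro x hx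
    refine (hX x hx).trans (card_le_card_of_injOn (fun a => -a) ?_ neg_injective.injOn)
    intro a ha
    simpa using ha

/-- A strictly convex function is strictly monotone on the points of a set that do not lie strictly
below the graph over all preceding points. -/
lemma StrictConvexOn.strictMonoOn_setOf_exists_le {f : ℝ → ℝ}
    (hf : StrictConvexOn ℝ Set.univ f) (s : Set ℝ) :
    StrictMonoOn f {a ∈ s | ∃ c ∈ s, c < a ∧ f c ≤ f a} := by
  rintro a ⟨_, c, _, hca, hfca⟩ a' _ hlt
  by_contra! h
  have hseg := hf.lt_on_openSegment (Set.mem_univ c) (Set.mem_univ a') (hca.trans hlt).ne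
    (by rw [openSegment_eq_Ioo (hca.trans hlt)]; exact ⟨hca, hlt⟩)
  exact hseg.not_ge (max_le hfca h)

lemma sg_image_le (f : ℝ → ℝ) (A C : Finset ℝ) (x : ℝ) :
    sg (A.image f) C x ≤ (A.filter fun a => x - f a ∈ C).card := by
  refine (card_le_card ?_).trans
    (card_image_le (s := A.filter fun a => x - f a ∈ C) (f := fun a => (f a, x - f a)))
  rintro ⟨v, c⟩ h
  simp only [mem_filter, mem_product, mem_image] at h ⊢
  obtain ⟨⟨⟨a, ha, rfl⟩, hc⟩, rfl⟩ := h
  exact ⟨a, ⟨ha, by simpa using hc⟩, by simp⟩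

/-- A bound for the number of reals with at least `τ ≥ 4` representations as a sum in `f(A) + C`. -/
lemma card_rich_mul_cube_le {f : ℝ → ℝ} (hf : StrictConvexOn ℝ Set.univ f) {A B C X : Finset ℝ}
    {τ : ℝ} (hτ : 4 ≤ τ) (hX : ∀ x ∈ X, τ ≤ (sg (A.image f) C x : ℝ)) :
    (X.card : ℝ) * B.card * τ ^ 3 ≤ 4096 * ((A + B).card : ℝ) ^ 2 * (C.card : ℝ) ^ 2 := by
  set U := A.filter fun a => ∃ c ∈ A, c < a ∧ f c ≤ f a
  set L := A.filter fun a => ¬∃ c ∈ A, c < a ∧ f c ≤ f a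
  have hU : StrictMonoOn f U := by
    simpa [U] using hf.strictMonoOn_setOf_exists_le (A : Set ℝ)
  have hL : StrictAntiOn f L := by
    intro a ha a' ha' hlt
    simp only [L, mem_coe, mem_filter] at ha ha'
    by_contra! h
    exact ha'.2 ⟨a, ha.1, hlt, h⟩
  obtain ⟨n, hn⟩ : ∃ n, n + 1 = ⌈τ / 2⌉₊ :=
    ⟨⌈τ / 2⌉₊ - 1, Nat.sub_add_cancel (Nat.ceil_pos.2 (by linarith))⟩
  have hnτ : τ / 4 ≤ n := by
    have := Nat.le_ceil (τ / 2)
    rw [← hn] at this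
    push_cast at this
    linarith
  have hn₀ : 0 < n := by
    have : (0 : ℝ) < n := by linarith
    exact_mod_cast this
  set XU := X.filter fun x => n + 1 ≤ (U.filter fun a => x - f a ∈ C).card
  set XL := X.filter fun x => n + 1 ≤ (L.filter fun a => x - f a ∈ C).card
  have hcover : X ⊆ XU ∪ XL := by
    intro x hx
    by_contra hnot
    simp only [XU, XL, mem_union, mem_filter, hx, true_and, hn, not_or, not_le, Nat.lt_ceil]
      at hnot
    have hsplit : (A.filter fun a => x - f a ∈ C) ⊆
        (U.filter fun a => x - f a ∈ C) ∪ (L.filter fun a => x - f a ∈ C) := by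
      intro a ha
      rw [mem_filter] at ha
      simp only [U, L, mem_union, mem_filter, ha.1, ha.2, true_and, and_true]
      exact em _
    have hsg : (sg (A.image f) C x : ℝ) ≤ (U.filter fun a => x - f a ∈ C).card
        + (L.filter fun a => x - f a ∈ C).card := by
      exact_mod_cast (sg_image_le f A C x).trans ((card_le_card hsplit).trans (card_union_le _ _))
    linarith [hX x hx]
  have hXU := card_rich_mul_le_of_strictMonoOn (B := B) hf hU hn₀
    fun x (hx : x ∈ XU) => (mem_filter.1 hx).2
  have hXL := card_rich_mul_le_of_strictAntiOn (B := B) hf hL hn₀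
    fun x (hx : x ∈ XL) => (mem_filter.1 hx).2
  have hUB : (U + B).card ≤ (A + B).card :=
    card_le_card (add_subset_add_right (filter_subset _ _))
  have hLB : (L + B).card ≤ (A + B).card :=
    card_le_card (add_subset_add_right (filter_subset _ _))
  have hnat : X.card * B.card * n ^ 3 ≤ 64 * (A + B).card ^ 2 * C.card ^ 2 := by
    calc X.card * B.card * n ^ 3 ≤ (XU.card + XL.card) * B.card * n ^ 3 := by
          gcongr
          exact (card_le_card hcover).trans (card_union_le _ _)
      _ = XU.card * B.card * n ^ 3 + XL.card * B.card * n ^ 3 := by ring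
      _ ≤ 32 * (U + B).card ^ 2 * C.card ^ 2 + 32 * (L + B).card ^ 2 * C.card ^ 2 :=
          add_le_add hXU hXL
      _ ≤ 32 * (A + B).card ^ 2 * C.card ^ 2 + 32 * (A + B).card ^ 2 * C.card ^ 2 := by gcongr
      _ = 64 * (A + B).card ^ 2 * C.card ^ 2 := by ring
  have hreal : (X.card : ℝ) * B.card * (n : ℝ) ^ 3 ≤ 64 * ((A + B).card : ℝ) ^ 2 * C.card ^ 2 := by
    exact_mod_cast hnat
  calc (X.card : ℝ) * B.card * τ ^ 3 = 64 * (X.card * B.card * (τ / 4) ^ 3) := by ring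
    _ ≤ 64 * (X.card * B.card * (n : ℝ) ^ 3) := by gcongr
    _ ≤ 64 * (64 * ((A + B).card : ℝ) ^ 2 * C.card ^ 2) := by gcongr
    _ = 4096 * ((A + B).card : ℝ) ^ 2 * (C.card : ℝ) ^ 2 := by ring

theorem stmt4 : ∃ K : ℝ, 0 < K ∧
    ∀ f : ℝ → ℝ, Continuous f → StrictConvexOn ℝ Set.univ f →
    ∀ A B C : Finset ℝ, A.Nonempty → B.Nonempty → C.Nonempty →
    A.card ^ 2 ≤ B.card * C.card →
    ∀ τ : ℝ, 1 ≤ τ →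
    (((A.image f + C).filter (fun x => τ ≤ (sg (A.image f) C x : ℝ))).card : ℝ) ≤
      K * ((A + B).card : ℝ) ^ 2 * (C.card : ℝ) ^ 2 / ((B.card : ℝ) * τ ^ 3) := by
  refine ⟨4096, by norm_num, fun f _ hf A B C hA hB hC _ τ hτ => ?_⟩
  have hBpos : (0 : ℝ) < B.card := by exact_mod_cast hB.card_pos
  rw [le_div_iff₀ (by positivity), ← mul_assoc]
  rcases le_or_gt 4 τ with h4 | h4
  · exact card_rich_mul_cube_le hf h4 fun x hx => (mem_filter.1 hx).2
  · have hcard : ((A.image f + C).filter (fun x => τ ≤ (sg (A.image f) C x : ℝ))).card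
        ≤ (A + B).card * C.card :=
      calc _ ≤ (A.image f + C).card := card_filter_le _ _
        _ ≤ (A.image f).card * C.card := card_add_le
        _ ≤ (A + B).card * C.card :=
          Nat.mul_le_mul_right _ (card_image_le.trans (card_le_card_add_right hB))
    have hcard' : (((A.image f + C).filter (fun x => τ ≤ (sg (A.image f) C x : ℝ))).card : ℝ)
        ≤ (A + B).card * C.card := by exact_mod_cast hcard
    have hBle : (B.card : ℝ) ≤ (A + B).card := by exact_mod_cast card_le_card_add_left hA
    have hCone : (1 : ℝ) ≤ C.card := by exact_mod_cast hC.card_pos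
    calc _ ≤ ((A + B).card * C.card : ℝ) * (A + B).card * 4 ^ 3 := by gcongr
      _ = 64 * ((A + B).card : ℝ) ^ 2 * C.card := by ring
      _ ≤ 4096 * ((A + B).card : ℝ) ^ 2 * (C.card : ℝ) ^ 2 := by
        gcongr
        · norm_num
        · nlinarith
end

section
/- There exists an absolute constant K such that the following holds. Let f : ℝ → ℝ be continuous and strictly convex, and let A, B, C ⊂ ℝ be finite nonempty sets with |B||C| ≥ |A|^2. Then for every real τ ≥ 1, the number of elements y with σ_{A,B}(y) ≥ τ is at most K · |f(A)+C|^2 |B|^2 / (|C| τ^3). -/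
open Finset Pointwise

theorem exists_monotone_blocks (S : Finset ℝ) {u : ℕ} (hu : 1 ≤ u) :
    ∃ g : ℝ → ℕ, Monotone g ∧ (∀ x, g x ≤ S.card / u) ∧
      ∀ k, (S.filter (fun x => g x = k)).card ≤ u := by
  have hmono : Monotone (fun x : ℝ => (S.filter (· < x)).card) := by
    intro x y hxy
    refine card_le_card fun z hz => ?_
    simp only [mem_filter] at hz ⊢
    exact ⟨hz.1, hz.2.trans_le hxy⟩
  refine ⟨fun x => (S.filter (· < x)).card / u,
    fun x y hxy => Nat.div_le_div_right (hmono hxy),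
    fun x => Nat.div_le_div_right (card_filter_le _ _), fun k => ?_⟩
  have hlt : ∀ x ∈ S, ∀ y, x < y → (S.filter (· < x)).card < (S.filter (· < y)).card := by
    intro x hx y hxy
    refine card_lt_card ⟨fun z hz => ?_, fun h => ?_⟩
    · simp only [mem_filter] at hz ⊢
      exact ⟨hz.1, hz.2.trans hxy⟩
    · have := h (mem_filter.2 ⟨hx, hxy⟩)
      simp at this
  calc (S.filter (fun x => (S.filter (· < x)).card / u = k)).card
      ≤ (Finset.Ico (k * u) (k * u + u)).card := by
        refine card_le_card_of_injOn (fun x => (S.filter (· < x)).card) ?_ ?_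
        · intro x hx
          simp only [coe_filter, Set.mem_ofPred_eq] at hx
          have h1 := Nat.div_add_mod (S.filter (· < x)).card u
          have h2 := Nat.mod_lt (S.filter (· < x)).card hu
          rw [hx.2, mul_comm] at h1
          simp only [coe_Ico, Set.mem_Ico]
          omega
        · intro x hx y hy hxy
          simp only [coe_filter, Set.mem_ofPred_eq] at hx hy
          rcases lt_trichotomy x y with h | h | h
          · exact absurd hxy (hlt x hx.1 y h).ne
          · exact h
          · exact absurd hxy (hlt y hy.1 x h).ne'
    _ = u := by simp

theorem card_image_prodMk_le_of_monotoneOn {T : Finset ℝ} {p q : ℝ → ℕ} {m n : ℕ}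
    (hp : MonotoneOn p T) (hq : MonotoneOn q T) (hm : ∀ x ∈ T, p x ≤ m) (hn : ∀ x ∈ T, q x ≤ n) :
    (T.image (fun a => (p a, q a))).card ≤ m + n + 1 := by
  rw [← card_range (m + n + 1)]
  refine card_le_card_of_injOn (fun z => z.1 + z.2) ?_ ?_
  · intro z hz
    simp only [coe_image, Set.mem_image, mem_coe] at hz
    obtain ⟨a, ha, rfl⟩ := hz
    have := hm a ha
    have := hn a ha
    simp only [coe_range, Set.mem_Iio]
    omega
  · intro z hz w hw hzw
    simp only [coe_image, Set.mem_image, mem_coe] at hz hw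
    obtain ⟨a, ha, rfl⟩ := hz
    obtain ⟨b, hb, rfl⟩ := hw
    simp only [Prod.mk.injEq] at hzw ⊢
    rcases le_total a b with h | h
    · have := hp ha hb h
      have := hq ha hb h
      omega
    · have := hp hb ha h
      have := hq hb ha h
      omega

theorem card_image_prodMk_le_of_antitoneOn {T : Finset ℝ} {p q : ℝ → ℕ} {m n : ℕ}
    (hp : MonotoneOn p T) (hq : AntitoneOn q T) (hm : ∀ x ∈ T, p x ≤ m) (hn : ∀ x ∈ T, q x ≤ n) :
    (T.image (fun a => (p a, q a))).card ≤ m + n + 1 := by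
  have hq' : MonotoneOn (fun a => n - q a) T := fun a ha b hb h =>
    Nat.sub_le_sub_left (hq ha hb h) n
  refine le_trans ?_ (card_image_prodMk_le_of_monotoneOn hp hq' hm fun x _ => Nat.sub_le _ _)
  refine card_le_card_of_injOn (fun z => (z.1, n - z.2)) ?_ ?_
  · intro z hz
    simp only [coe_image, Set.mem_image, mem_coe] at hz ⊢
    obtain ⟨a, ha, rfl⟩ := hz
    exact ⟨a, ha, rfl⟩
  · intro z hz w hw hzw
    simp only [coe_image, Set.mem_image, mem_coe] at hz hw
    obtain ⟨a, ha, rfl⟩ := hz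
    obtain ⟨b, hb, rfl⟩ := hw
    simp only [Prod.mk.injEq] at hzw ⊢
    have := hn a ha
    have := hn b hb
    omega

theorem card_le_card_image_add_card_collisions {α β : Type*} [DecidableEq α] [DecidableEq β]
    [Nonempty α] (T : Finset α) (c : α → β) :
    T.card ≤ (T.image c).card +
      ((T ×ˢ T).filter (fun z => z.1 ≠ z.2 ∧ c z.1 = c z.2)).card := by
  have hrep : ∀ k ∈ T.image c, ∃ a ∈ T, c a = k := fun k hk => mem_image.1 hk
  choose! rep hrepT hrep using hrep
  rw [← card_filter_add_card_filter_not (fun a => rep (c a) = a)]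
  refine Nat.add_le_add ?_ ?_
  · refine card_le_card_of_injOn c ?_ ?_
    · intro a ha
      exact mem_image_of_mem c (mem_filter.1 ha).1
    · intro a ha b hb hab
      rw [← (mem_filter.1 ha).2, ← (mem_filter.1 hb).2, hab]
  · refine card_le_card_of_injOn (fun a => (a, rep (c a))) ?_ ?_
    · intro a ha
      obtain ⟨haT, hne⟩ := mem_filter.1 (mem_coe.1 ha)
      have hk := mem_image_of_mem c haT
      exact mem_coe.2 (mem_filter.2
        ⟨mem_product.2 ⟨haT, hrepT _ hk⟩, Ne.symm hne, (hrep _ hk).symm⟩)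
    · intro a _ b _ hab
      exact congrArg Prod.fst hab

theorem StrictConvexOn.sub_lt_sub_of_translate {f : ℝ → ℝ} (hf : StrictConvexOn ℝ Set.univ f)
    {x y h : ℝ} (hh : 0 < h) (hxy : x < y) : f (x + h) - f x < f (y + h) - f y := by
  have h1 := hf.secant_strict_mono (a := x) (x := x + h) (y := y + h) trivial trivial trivial
    (by linarith) (by linarith) (by linarith)
  have h2 := hf.secant_strict_mono (a := y + h) (x := x) (y := y) trivial trivial trivial
    (by linarith) (by linarith) hxy
  rw [← neg_div_neg_eq, ← neg_div_neg_eq (f y - _)] at h2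
  simp only [neg_sub] at h2
  have h3 := h1.trans h2
  simp only [add_sub_cancel_left] at h3
  exact (div_lt_div_iff_of_pos_right hh).1 h3

/-- Two distinct points of the graph are determined by their difference. -/
theorem StrictConvexOn.eq_of_sub_eq_sub_s5 {f : ℝ → ℝ} (hf : StrictConvexOn ℝ Set.univ f)
    {x x' y y' : ℝ} (hne : x ≠ x') (hx : x - x' = y - y') (hfx : f x - f x' = f y - f y') :
    x = y := by
  wlog hlt : x' < x generalizing x x' y y'
  · have := this hne.symm (by linarith : x' - x = y' - y) (by linarith)
      (lt_of_le_of_ne (not_lt.1 hlt) hne)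
    linarith
  have key : ∀ {s t : ℝ}, s < t →
      f (s + (x - x')) - f s < f (t + (x - x')) - f t :=
    fun hst => hf.sub_lt_sub_of_translate (sub_pos.2 hlt) hst
  have e1 : x' + (x - x') = x := by ring
  have e2 : y' + (x - x') = y := by linarith
  rcases lt_trichotomy x' y' with h | h | h
  · have := key h
    rw [e1, e2] at this
    linarith
  · linarith
  · have := key h
    rw [e1, e2] at this
    linarith

theorem StrictConvexOn.exists_antitoneOn_monotoneOn {f : ℝ → ℝ}
    (hf : StrictConvexOn ℝ Set.univ f) {A : Finset ℝ} (hA : A.Nonempty) :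
    ∃ t, AntitoneOn f (A.filter (· ≤ t)) ∧ MonotoneOn f (A.filter (t < ·)) := by
  obtain ⟨t, ht, hmin⟩ := A.exists_min_image f hA
  refine ⟨t, fun x hx y hy hxy => ?_, fun x hx y hy hxy => ?_⟩ <;>
    simp only [coe_filter, Set.mem_ofPred_eq] at hx hy
  · have := hf.convexOn.le_max_of_mem_Icc (x := x) (y := t) (z := y) trivial trivial ⟨hxy, hy.2⟩
    rwa [max_eq_left (hmin x hx.1)] at this
  · have := hf.convexOn.le_max_of_mem_Icc (x := t) (y := y) (z := x) trivial trivial ⟨hx.2.le, hxy⟩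
    rwa [max_eq_right (hmin y hy.1)] at this

theorem StrictConvexOn.card_le_two_mul_card_image {f : ℝ → ℝ}
    (hf : StrictConvexOn ℝ Set.univ f) (A : Finset ℝ) : A.card ≤ 2 * (A.image f).card := by
  refine card_le_mul_card_image A 2 fun v _ => ?_
  by_contra! hcard
  obtain ⟨x, y, z, hx, hy, hz, hxy, hyz⟩ : ∃ x y z, f x = v ∧ f y = v ∧ f z = v ∧ x < y ∧ y < z := by
    set S := A.filter (fun a => f a = v)
    have hv : ∀ i, f (S.orderEmbOfFin rfl i) = v := fun i =>
      (mem_filter.1 (S.orderEmbOfFin_mem rfl i)).2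
    exact ⟨_, _, _, hv ⟨0, by omega⟩, hv ⟨1, by omega⟩, hv ⟨2, by omega⟩,
      (S.orderEmbOfFin rfl).strictMono (by simp), (S.orderEmbOfFin rfl).strictMono (by simp)⟩
  have := hf.slope_strict_mono_adjacent trivial trivial hxy hyz
  simp [hx, hy, hz] at this

/-- Splitting the grid `Y ×ˢ (A.image f + C)` into boxes of size `u` by `v` bounds the number of
incidences between the grid and the translates of the graph of `f` by `B ×ˢ C`. -/
theorem StrictConvexOn.sum_card_filter_le {f : ℝ → ℝ} (hf : StrictConvexOn ℝ Set.univ f)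
    {A : Finset ℝ} (hA : A.Nonempty) (B C Y : Finset ℝ) {u v : ℕ} (hu : 1 ≤ u) (hv : 1 ≤ v) :
    ∑ _c ∈ C, ∑ b ∈ B, (A.filter (fun a => a + b ∈ Y)).card ≤
      C.card * (B.card * (2 * (Y.card / u + (A.image f + C).card / v + 1))) +
        Y.card * (A.image f + C).card * (u * v) := by
  obtain ⟨g, hg, hgle, hgcard⟩ := exists_monotone_blocks Y hu
  obtain ⟨k, hk, hkle, hkcard⟩ := exists_monotone_blocks (A.image f + C) hv
  obtain ⟨t, hanti, hmono⟩ := hf.exists_antitoneOn_monotoneOn hA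
  set D := A.image f + C with hD
  let T : ℝ → Finset ℝ := fun b => A.filter (fun a => a + b ∈ Y)
  let cell : ℝ → ℝ → ℝ → ℕ × ℕ := fun c b a => (g (a + b), k (f a + c))
  have hcells : ∀ c b, ((T b).image (cell c b)).card ≤ 2 * (Y.card / u + D.card / v + 1) := by
    intro c b
    have hgb : Monotone (fun a => g (a + b)) := fun x y h => hg (by linarith)
    have hsplit : T b = (T b).filter (· ≤ t) ∪ (T b).filter (t < ·) := by
      ext x
      simp only [mem_union, mem_filter]
      have := le_or_gt x t
      tauto
    have hsub : ∀ (p : ℝ → Prop) [DecidablePred p], ∀ x ∈ (T b).filter p, x ∈ A.filter p :=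
      fun p _ x hx => mem_filter.2 ⟨(mem_filter.1 (mem_filter.1 hx).1).1, (mem_filter.1 hx).2⟩
    have h1 := card_image_prodMk_le_of_antitoneOn (T := (T b).filter (· ≤ t))
      (p := fun a => g (a + b)) (q := fun a => k (f a + c)) (hgb.monotoneOn _)
      (fun x hx y hy h => hk (by
        have := hanti (hsub _ x hx) (hsub _ y hy) h
        linarith)) (fun x _ => hgle _) (fun x _ => hkle _)
    have h2 := card_image_prodMk_le_of_monotoneOn (T := (T b).filter (t < ·))
      (p := fun a => g (a + b)) (q := fun a => k (f a + c)) (hgb.monotoneOn _)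
      (fun x hx y hy h => hk (by
        have := hmono (hsub _ x hx) (hsub _ y hy) h
        linarith)) (fun x _ => hgle _) (fun x _ => hkle _)
    rw [hsplit, image_union]
    refine (card_union_le _ _).trans ?_
    simp only [cell]
    omega
  let coll : ℝ → ℝ → Finset (ℝ × ℝ) := fun c b =>
    ((T b) ×ˢ (T b)).filter (fun z => z.1 ≠ z.2 ∧ cell c b z.1 = cell c b z.2)
  have hcoll : ∑ c ∈ C, ∑ b ∈ B, (coll c b).card ≤ Y.card * D.card * (u * v) := by
    let P := Y ×ˢ D
    let box : ℝ × ℝ → ℕ × ℕ := fun p => (g p.1, k p.2)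
    calc ∑ c ∈ C, ∑ b ∈ B, (coll c b).card
        = ((C ×ˢ B).sigma (fun w => coll w.1 w.2)).card := by
          rw [card_sigma, sum_product]
      _ ≤ (P.sigma (fun p => P.filter (fun q => box q = box p))).card := by
          refine card_le_card_of_injOn
            (fun w => ⟨(w.2.1 + w.1.2, f w.2.1 + w.1.1), (w.2.2 + w.1.2, f w.2.2 + w.1.1)⟩) ?_ ?_
          · rintro ⟨⟨c, b⟩, ⟨a, a'⟩⟩ hw
            simp only [coe_sigma, Set.mem_sigma_iff, mem_coe, mem_product, mem_filter, coll, T, P,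
              box, cell, Prod.mk.injEq] at hw ⊢
            obtain ⟨⟨hc, hb⟩, ⟨⟨ha, haY⟩, ha', haY'⟩, -, h1, h2⟩ := hw
            exact ⟨⟨haY, add_mem_add (mem_image_of_mem f ha) hc⟩,
              ⟨haY', add_mem_add (mem_image_of_mem f ha') hc⟩, h1.symm, h2.symm⟩
          · rintro ⟨⟨c, b⟩, ⟨a, a'⟩⟩ hw ⟨⟨c₁, b₁⟩, ⟨a₁, a₁'⟩⟩ - heq
            simp only [coe_sigma, Set.mem_sigma_iff, mem_coe, mem_filter, coll] at hw
            simp only [Sigma.mk.injEq, Prod.mk.injEq, heq_eq_eq] at heq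
            obtain ⟨⟨e1, e2⟩, e3, e4⟩ := heq
            obtain rfl : a = a₁ :=
              hf.eq_of_sub_eq_sub_s5 hw.2.2.1 (by linarith : a - a' = a₁ - a₁') (by linarith)
            obtain rfl : b = b₁ := by linarith
            obtain rfl : c = c₁ := by linarith
            obtain rfl : a' = a₁' := by linarith
            rfl
      _ = ∑ p ∈ P, (P.filter (fun q => box q = box p)).card := card_sigma _ _
      _ ≤ ∑ _p ∈ P, u * v := by
          refine sum_le_sum fun p _ => ?_
          calc (P.filter (fun q => box q = box p)).card
              ≤ (Y.filter (fun x => g x = g p.1) ×ˢ D.filter (fun x => k x = k p.2)).card := by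
                refine card_le_card fun q hq => ?_
                simp only [P, box, mem_filter, mem_product, Prod.mk.injEq] at hq ⊢
                tauto
            _ ≤ u * v := by
                rw [card_product]
                exact Nat.mul_le_mul (hgcard _) (hkcard _)
      _ = Y.card * D.card * (u * v) := by simp [P]
  calc ∑ c ∈ C, ∑ b ∈ B, (T b).card
      ≤ ∑ c ∈ C, ∑ b ∈ B, (2 * (Y.card / u + D.card / v + 1) + (coll c b).card) :=
        sum_le_sum fun c _ => sum_le_sum fun b _ =>
          (card_le_card_image_add_card_collisions (T b) (cell c b)).trans
            (Nat.add_le_add_right (hcells c b) _)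
    _ = C.card * (B.card * (2 * (Y.card / u + D.card / v + 1))) +
          ∑ c ∈ C, ∑ b ∈ B, (coll c b).card := by
        simp only [sum_add_distrib, sum_const, smul_eq_mul]
    _ ≤ _ := Nat.add_le_add_left hcoll _

/-- Optimising the box sizes in the incidence bound: here `M`, `D` are the sides of the grid, `N` is
the number of curves and `I` the number of incidences. -/
theorem incidence_le_of_forall_blocks {M D N : ℕ} {I : ℝ} (hM : 0 < M) (hD : 0 < D) (hN : 0 < N)
    (hIM : I ≤ N * M) (hID : I ≤ 2 * (N * D))
    (hI : ∀ u v : ℕ, 1 ≤ u → 1 ≤ v →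
      I ≤ N * (2 * ((M : ℝ) / u + (D : ℝ) / v + 1)) + M * D * (u * v)) :
    I ≤ 11 * N ∨ I ^ 3 ≤ 2197 * (N ^ 2 * M ^ 2 * D ^ 2) := by
  have hM' : (0 : ℝ) < M := by exact_mod_cast hM
  have hD' : (0 : ℝ) < D := by exact_mod_cast hD
  have hN' : (0 : ℝ) < N := by exact_mod_cast hN
  obtain ⟨r, hr, hr3⟩ : ∃ r : ℝ, 0 < r ∧ r ^ 3 = (M : ℝ) ^ 2 * D ^ 2 / N := by
    refine ⟨((M : ℝ) ^ 2 * D ^ 2 / N) ^ ((1 : ℝ) / 3), by positivity, ?_⟩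
    rw [← Real.rpow_natCast, ← Real.rpow_mul (by positivity)]
    norm_num
  have hr3' : N * r ^ 3 = (M : ℝ) ^ 2 * D ^ 2 := by
    rw [hr3]
    field_simp
  rcases lt_or_ge r 1 with hr1 | hr1
  · left
    have h := hI M D hM hD
    rw [div_self hM'.ne', div_self hD'.ne'] at h
    have : r ^ 3 ≤ 1 := pow_le_one₀ hr.le hr1.le
    nlinarith
  right
  have hIr : I ≤ 13 * (N * r) := by
    have hNr : 0 < N * r := by positivity
    rcases le_total (M : ℝ) r with h | hMr
    · have := mul_le_mul_of_nonneg_left h hN'.le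
      linarith
    rcases le_total (D : ℝ) r with h | hDr
    · have := mul_le_mul_of_nonneg_left h hN'.le
      linarith
    have hfloor : ∀ X : ℝ, r ≤ X → 1 ≤ ⌊X / r⌋₊ ∧ X / ⌊X / r⌋₊ ≤ 2 * r := by
      intro X hX
      have h1 : 1 ≤ X / r := (one_le_div hr).2 hX
      have h2 : 1 ≤ ⌊X / r⌋₊ := Nat.floor_pos.2 h1
      have h2' : (1 : ℝ) ≤ ⌊X / r⌋₊ := by exact_mod_cast h2
      refine ⟨h2, ?_⟩
      have h3 := Nat.lt_floor_add_one (X / r)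
      rw [div_lt_iff₀ hr] at h3
      rw [div_le_iff₀ (by linarith)]
      nlinarith
    obtain ⟨hu, hMu⟩ := hfloor M hMr
    obtain ⟨hv, hDv⟩ := hfloor D hDr
    have h := hI _ _ hu hv
    have huv : (⌊(M : ℝ) / r⌋₊ : ℝ) * ⌊(D : ℝ) / r⌋₊ ≤ M / r * (D / r) :=
      mul_le_mul (Nat.floor_le (by positivity)) (Nat.floor_le (by positivity)) (by positivity)
        (by positivity)
    have hbox : (M : ℝ) * D * (M / r * (D / r)) = N * r := by
      field_simp
      linarith
    have h1 := mul_le_mul_of_nonneg_left huv (by positivity : (0 : ℝ) ≤ M * D)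
    have h2 : N * (2 * ((M : ℝ) / ⌊(M : ℝ) / r⌋₊ + (D : ℝ) / ⌊(D : ℝ) / r⌋₊ + 1)) ≤
        N * (2 * (2 * r + 2 * r + r)) := by gcongr
    linarith
  rcases le_total I 0 with h0 | h0
  · have : I ^ 3 ≤ 0 := by
      have := mul_nonneg (neg_nonneg.2 h0) (sq_nonneg I)
      nlinarith
    exact this.trans (by positivity)
  calc I ^ 3 ≤ (13 * (N * r)) ^ 3 := pow_le_pow_left₀ h0 hIr 3
    _ = 2197 * (N ^ 2 * (N * r ^ 3)) := by ring
    _ = _ := by rw [hr3']; ring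

theorem sg_eq_card_filter_right (A B : Finset ℝ) (y : ℝ) :
    sg A B y = (B.filter (fun b => y - b ∈ A)).card := by
  unfold sg
  refine card_bij' (fun p _ => p.2) (fun b _ => (y - b, b)) ?_ ?_ ?_ ?_
  · rintro ⟨a, b⟩ h
    simp only [mem_filter, mem_product] at h ⊢
    refine ⟨h.1.2, ?_⟩
    rw [← h.2, add_sub_cancel_right]
    exact h.1.1
  · intro b h
    simp only [mem_filter, mem_product] at h ⊢
    exact ⟨⟨h.2, h.1⟩, by ring⟩
  · rintro ⟨a, b⟩ h
    simp only [mem_filter, mem_product] at h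
    rw [← h.2, add_sub_cancel_right]
  · intro b _
    rfl

theorem sg_eq_card_filter_left (A B : Finset ℝ) (y : ℝ) :
    sg A B y = (A.filter (fun a => y - a ∈ B)).card := by
  rw [← sg_eq_card_filter_right]
  unfold sg
  refine card_equiv (Equiv.prodComm ℝ ℝ) fun p => ?_
  simp [and_comm, add_comm]

theorem sum_card_filter_add_mem_eq_sum_sg (A B Y : Finset ℝ) :
    ∑ b ∈ B, (A.filter (fun a => a + b ∈ Y)).card = ∑ y ∈ Y, sg A B y := by
  simp only [sg_eq_card_filter_right]
  refine Eq.trans ?_ (sum_card_bipartiteAbove_eq_sum_card_bipartiteBelow (fun b y => y - b ∈ A))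
  refine sum_congr rfl fun b _ => ?_
  refine card_bij' (fun a _ => a + b) (fun y _ => y - b) ?_ ?_ ?_ ?_ <;>
    simp +contextual [bipartiteAbove]

theorem stmt5 : ∃ K : ℝ, 0 < K ∧
    ∀ f : ℝ → ℝ, Continuous f → StrictConvexOn ℝ Set.univ f →
    ∀ A B C : Finset ℝ, A.Nonempty → B.Nonempty → C.Nonempty →
    A.card ^ 2 ≤ B.card * C.card →
    ∀ τ : ℝ, 1 ≤ τ →
    (((A + B).filter (fun y => τ ≤ (sg A B y : ℝ))).card : ℝ) ≤
      K * ((A.image f + C).card : ℝ) ^ 2 * (B.card : ℝ) ^ 2 / ((C.card : ℝ) * τ ^ 3) := by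
  refine ⟨2197, by norm_num, fun f _ hf A B C hA hB hC _ τ hτ => ?_⟩
  set Y := (A + B).filter (fun y => τ ≤ (sg A B y : ℝ)) with hY
  set D := A.image f + C with hD
  have hτ0 : 0 < τ := by linarith
  have hc : (0 : ℝ) < C.card := by exact_mod_cast hC.card_pos
  have hb : (0 : ℝ) < B.card := by exact_mod_cast hB.card_pos
  rw [le_div_iff₀ (by positivity)]
  rcases Y.eq_empty_or_nonempty with hYe | hYne
  · rw [hYe, card_empty, Nat.cast_zero, zero_mul]
    positivity
  have hm : (0 : ℝ) < Y.card := by exact_mod_cast hYne.card_pos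
  have hDne : D.Nonempty := (hA.image f).add hC
  have hfAD : (A.image f).card ≤ D.card := card_le_card_add_right hC
  have hCD : C.card ≤ D.card := card_le_card_add_left (hA.image f)
  have hAD : A.card ≤ 2 * D.card := (hf.card_le_two_mul_card_image A).trans (by omega)
  obtain ⟨y, hy⟩ := hYne
  have hyτ := (mem_filter.1 hy).2
  have hτA : τ ≤ A.card := hyτ.trans (by
    rw [sg_eq_card_filter_left]
    exact_mod_cast card_filter_le _ _)
  have hτB : τ ≤ B.card := hyτ.trans (by
    rw [sg_eq_card_filter_right]
    exact_mod_cast card_filter_le _ _)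
  set I := ∑ _c ∈ C, ∑ b ∈ B, (A.filter (fun a => a + b ∈ Y)).card with hI
  have hlow : (C.card : ℝ) * (Y.card * τ) ≤ I := by
    rw [hI, sum_const, smul_eq_mul, sum_card_filter_add_mem_eq_sum_sg]
    push_cast
    refine mul_le_mul_of_nonneg_left ?_ hc.le
    rw [← nsmul_eq_mul]
    exact card_nsmul_le_sum _ _ _ fun z hz => (mem_filter.1 hz).2
  have hbound : ∀ n : ℕ, (∀ b, (A.filter (fun a => a + b ∈ Y)).card ≤ n) →
      I ≤ B.card * C.card * n := by
    intro n hn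
    calc I ≤ ∑ _c ∈ C, ∑ _b ∈ B, n := sum_le_sum fun _ _ => sum_le_sum fun b _ => hn b
      _ = B.card * C.card * n := by
        simp only [sum_const, smul_eq_mul]
        ring
  have hIM : I ≤ B.card * C.card * Y.card := hbound _ fun b =>
    card_le_card_of_injOn (· + b) (fun a ha => (mem_filter.1 ha).2)
      (add_left_injective b).injOn
  have hID : I ≤ 2 * (B.card * C.card * D.card) :=
    (hbound _ fun b => (card_filter_le _ _).trans hAD).trans (by linarith)
  have hblocks : ∀ u v : ℕ, 1 ≤ u → 1 ≤ v →
      (I : ℝ) ≤ (B.card * C.card : ℕ) * (2 * ((Y.card : ℝ) / u + (D.card : ℝ) / v + 1)) +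
        Y.card * D.card * (u * v) := by
    intro u v hu hv
    have h : (I : ℝ) ≤ _ := Nat.cast_le.2 (hf.sum_card_filter_le hA B C Y hu hv)
    refine h.trans ?_
    push_cast
    rw [mul_comm (B.card : ℝ) C.card, mul_assoc (C.card : ℝ)]
    gcongr <;> exact Nat.cast_div_le
  rcases incidence_le_of_forall_blocks (card_pos.2 ⟨y, hy⟩) hDne.card_pos
    (Nat.mul_pos hB.card_pos hC.card_pos) (by exact_mod_cast hIM) (by exact_mod_cast hID)
    hblocks with h | h
  · have h1 : (Y.card : ℝ) * τ ≤ 11 * B.card := by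
      have := hlow.trans h
      push_cast at this
      refine le_of_mul_le_mul_left ?_ hc
      linarith
    have hττ : τ * τ ≤ A.card * B.card := mul_le_mul hτA hτB hτ0.le (by positivity)
    have hAC : (A.card : ℝ) * C.card ≤ 2 * D.card * D.card := by
      have h2 : A.card * C.card ≤ 2 * D.card * D.card := Nat.mul_le_mul hAD hCD
      exact_mod_cast h2
    calc (Y.card : ℝ) * (C.card * τ ^ 3) = (Y.card * τ) * C.card * (τ * τ) := by ring
      _ ≤ (11 * B.card) * C.card * (A.card * B.card) := by gcongr
      _ = 11 * B.card ^ 2 * (A.card * C.card) := by ring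
      _ ≤ 11 * B.card ^ 2 * (2 * D.card * D.card) := by gcongr
      _ = 22 * ((D.card : ℝ) ^ 2 * B.card ^ 2) := by ring
      _ ≤ 2197 * ((D.card : ℝ) ^ 2 * B.card ^ 2) := by gcongr; norm_num
      _ = _ := by ring
  · have h1 := (pow_le_pow_left₀ (by positivity) hlow 3).trans h
    push_cast at h1
    refine le_of_mul_le_mul_left ?_ (by positivity : (0 : ℝ) < C.card ^ 2 * Y.card ^ 2)
    linarith
end

section
/- There exists an absolute constant K such that for every continuous strictly convex function f : ℝ → ℝ and all finite sets A, C ⊂ ℝ with |A|/2 ≤ |C| ≤ 2|A| and |A| ≥ 2, one has |f(A)+C|^{10} · |A+A|^9 ≥ K · |A|^{24} / (log|A|)^2. -/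
open Finset Pointwise

/-- A map to `n` colours collides with a chosen representative at all but `n` points. -/
lemma exists_collisions {α : Type*} [Nonempty α] (P : Finset α) (k : α → ℕ) (n : ℕ)
    (hk : ∀ x ∈ P, k x < n) :
    ∃ D ⊆ P, ∃ r : α → α, #P - n ≤ #D ∧ ∀ x ∈ D, r x ∈ P ∧ r x ≠ x ∧ k (r x) = k x := by
  classical
  have h : ∀ x ∈ P.image k, ∃ y ∈ P, k y = x := by simp
  choose! g hgP hgk using h
  refine ⟨P.filter (fun x => g (k x) ≠ x), filter_subset _ _, fun x => g (k x), ?_, ?_⟩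
  · have h1 : #(P.filter (fun x => g (k x) = x)) ≤ #(range n) := by
      apply card_le_card_of_injOn k
      · intro x hx
        simp only [coe_filter, Set.mem_ofPred_eq] at hx
        simpa using hk x hx.1
      · intro x hx y hy hxy
        simp only [coe_filter, Set.mem_ofPred_eq] at hx hy
        rw [← hx.2, ← hy.2, hxy]
    have h2 := card_filter_add_card_filter_not (s := P) (fun x => g (k x) = x)
    rw [card_range] at h1
    simp only [ne_eq]
    omega
  · intro x hx
    rw [mem_filter] at hx
    have := mem_image_of_mem k hx.1
    exact ⟨hgP _ this, hx.2, hgk _ this⟩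

/-- A finite set of reals can be cut into `t` intervals of roughly equal cardinality. -/
lemma exists_monotone_blocks_s13 (B : Finset ℝ) (t : ℕ) (ht : 0 < t) :
    ∃ β : ℝ → ℕ, Monotone β ∧ (∀ b ∈ B, β b < t) ∧
      #((B ×ˢ B).filter (fun p => β p.1 = β p.2)) * t ≤ #B * (#B + t) := by
  classical
  set w := #B / t + 1 with hw
  have hw0 : 0 < w := Nat.succ_pos _
  have hwt : w * t ≤ #B + t := by
    rw [hw, add_mul, one_mul]
    exact Nat.add_le_add_right (Nat.div_mul_le_self _ _) _
  have hwt' : #B < t * w := Nat.lt_mul_div_succ _ ht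
  let rk : ℝ → ℕ := fun x => #(B.filter (· < x))
  have hrk : Monotone rk := fun x y hxy =>
    card_le_card (monotone_filter_right _ (fun z _ hz => lt_of_lt_of_le hz hxy))
  have hrk' : StrictMonoOn rk B := fun x hx y hy hxy => by
    apply card_lt_card
    refine (ssubset_iff_of_subset
      (monotone_filter_right _ (fun z _ hz => lt_trans hz hxy))).2 ⟨x, ?_, ?_⟩
    · simpa using ⟨hx, hxy⟩
    · simp
  refine ⟨fun x => rk x / w, fun x y h => Nat.div_le_div_right (hrk h), ?_, ?_⟩
  · intro b hb
    rw [Nat.div_lt_iff_lt_mul hw0]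
    refine lt_of_lt_of_le (card_lt_card ?_) hwt'.le
    refine (ssubset_iff_of_subset (filter_subset _ _)).2 ⟨b, hb, by simp⟩
  · have h1 : #((B ×ˢ B).filter (fun p => rk p.1 / w = rk p.2 / w)) ≤ #(B ×ˢ range w) := by
      apply card_le_card_of_injOn (fun p => (p.1, rk p.2 % w))
      · intro p hp
        simp only [coe_filter, Set.mem_ofPred_eq, mem_product] at hp
        simpa using ⟨hp.1.1, Nat.mod_lt _ hw0⟩
      · rintro ⟨p, p'⟩ hp ⟨q, q'⟩ hq hpq
        simp only [coe_filter, Set.mem_ofPred_eq, mem_product] at hp hq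
        simp only [Prod.mk.injEq] at hpq ⊢
        obtain ⟨rfl, hmod⟩ := hpq
        refine ⟨rfl, hrk'.injOn hp.1.2 hq.1.2 ?_⟩
        rw [← Nat.div_add_mod (rk p') w, ← Nat.div_add_mod (rk q') w, ← hp.2, ← hq.2, hmod]
    rw [card_product, card_range] at h1
    calc _ ≤ #B * w * t := Nat.mul_le_mul_right _ h1
      _ = #B * (w * t) := by ring
      _ ≤ _ := Nat.mul_le_mul_left _ hwt

/-- An incidence bound for the increasing curves `x ↦ f (x + s) + c`, any two of which share at
most one point, with the grid `B × (f(A) + C)`. -/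
lemma card_rich_translates_le {f : ℝ → ℝ}
    (hf : ∀ x y, x ≠ y → Function.Injective fun s => f (x + s) - f (y + s))
    {A : Finset ℝ} (hA : MonotoneOn f A) (B C S : Finset ℝ) {τ t : ℕ} (ht : 0 < t)
    (hS : ∀ s ∈ S, τ ≤ #(B.filter (fun b => b + s ∈ A))) :
    #S * #C * (τ - 2 * t) * t ^ 2 ≤
      #B * (#B + t) * (#(A.image f + C) * (#(A.image f + C) + t)) := by
  set Y := A.image f + C with hY
  obtain ⟨β, hβ, hβt, hβc⟩ := exists_monotone_blocks_s13 B t ht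
  obtain ⟨η, hη, hηt, hηc⟩ := exists_monotone_blocks_s13 Y t ht
  have hmem : ∀ s, ∀ c ∈ C, ∀ b ∈ B.filter (fun b => b + s ∈ A), f (b + s) + c ∈ Y := by
    intro s c hc b hb
    exact add_mem_add (mem_image_of_mem _ (mem_filter.1 hb).2) hc
  have hcol : ∀ q ∈ S ×ˢ C, _ := fun q hq =>
    exists_collisions (B.filter (fun b => b + q.1 ∈ A))
      (fun b => β b + η (f (b + q.1) + q.2)) (2 * t) (by
        intro b hb
        have h1 := hβt b (mem_filter.1 hb).1
        have h2 := hηt _ (hmem q.1 q.2 (mem_product.1 hq).2 b hb)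
        omega)
  choose! D hD r hDc hr using hcol
  have hcells : ∀ q ∈ S ×ˢ C, ∀ x ∈ D q, β (r q x) = β x ∧
      η (f (r q x + q.1) + q.2) = η (f (x + q.1) + q.2) := by
    intro q hq x hx
    obtain ⟨h1, -, h3⟩ := hr q hq x hx
    have hx' := (mem_filter.1 (hD q hq hx)).2
    have h1' := (mem_filter.1 h1).2
    rcases le_total (r q x) x with h | h
    · have e1 := hβ h
      have e2 := hη (add_le_add_left (hA h1' hx' (add_le_add_left h q.1)) q.2)
      omega
    · have e1 := hβ h
      have e2 := hη (add_le_add_left (hA hx' h1' (add_le_add_left h q.1)) q.2)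
      omega
  have hcard : #((S ×ˢ C).sigma D) ≤ #(((B ×ˢ B).filter (fun p => β p.1 = β p.2)) ×ˢ
      ((Y ×ˢ Y).filter (fun p => η p.1 = η p.2))) := by
    apply card_le_card_of_injOn (fun z => ((r z.1 z.2, z.2),
      (f (r z.1 z.2 + z.1.1) + z.1.2, f (z.2 + z.1.1) + z.1.2)))
    · rintro ⟨q, x⟩ hz
      simp only [coe_sigma, Set.mem_sigma_iff, mem_coe] at hz
      obtain ⟨hq, hx⟩ := hz
      have hc := (mem_product.1 hq).2
      have h1 := (hr q hq x hx).1
      have h2 := hD q hq hx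
      have h3 := hcells q hq x hx
      simp only [mem_coe, mem_product, mem_filter]
      exact ⟨⟨⟨(mem_filter.1 h1).1, (mem_filter.1 h2).1⟩, h3.1⟩,
        ⟨hmem _ _ hc _ h1, hmem _ _ hc _ h2⟩, h3.2⟩
    · rintro ⟨⟨s, c⟩, x⟩ hz ⟨⟨s', c'⟩, x'⟩ hz' h
      simp only [coe_sigma, Set.mem_sigma_iff, mem_coe] at hz hz'
      simp only [Prod.mk.injEq] at h
      obtain ⟨⟨h1, rfl⟩, h3, h4⟩ := h
      have hne := (hr _ hz.1 x hz.2).2.1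
      have hs : s = s' := by
        apply hf _ _ hne
        simp only
        rw [← h1] at h3
        linarith
      subst hs
      have hc : c = c' := by linarith
      subst hc
      rfl
  have hlow : #S * #C * (τ - 2 * t) ≤ #((S ×ˢ C).sigma D) := by
    rw [card_sigma, ← card_product, ← smul_eq_mul]
    apply card_nsmul_le_sum
    intro q hq
    have h1 := hDc q hq
    have h2 := hS q.1 (mem_product.1 hq).1
    omega
  rw [card_product] at hcard
  calc _ ≤ (#((B ×ˢ B).filter (fun p => β p.1 = β p.2)) *
        #((Y ×ˢ Y).filter (fun p => η p.1 = η p.2))) * t ^ 2 :=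
        Nat.mul_le_mul_right _ (hlow.trans hcard)
    _ = (#((B ×ˢ B).filter (fun p => β p.1 = β p.2)) * t) *
        (#((Y ×ˢ Y).filter (fun p => η p.1 = η p.2)) * t) := by ring
    _ ≤ _ := Nat.mul_le_mul hβc hηc

lemma dlt_eq_card_filter (A B : Finset ℝ) (s : ℝ) :
    dlt A B s = #(B.filter (fun b => b + s ∈ A)) := by
  apply card_nbij' Prod.snd (fun b => (b + s, b))
  · rintro ⟨a, b⟩ h
    simp only [mem_coe, mem_filter, mem_product] at h ⊢
    obtain ⟨⟨ha, hb⟩, rfl⟩ := h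
    simpa using ⟨hb, ha⟩
  · intro b h
    simp only [mem_coe, mem_filter, mem_product] at h ⊢
    exact ⟨⟨h.2, h.1⟩, by ring⟩
  · rintro ⟨a, b⟩ h
    simp only [mem_coe, mem_filter, mem_product] at h
    simp only [Prod.mk.injEq, and_true]
    linarith [h.2]
  · intro b _
    rfl

lemma mem_sub_of_dlt_pos {A B : Finset ℝ} {s : ℝ} (h : 0 < dlt A B s) : s ∈ A - B := by
  obtain ⟨p, hp⟩ := card_pos.1 h
  rw [mem_filter, mem_product] at hp
  exact hp.2 ▸ sub_mem_sub hp.1.1 hp.1.2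

lemma dlt_le_card_left (A B : Finset ℝ) (s : ℝ) : dlt A B s ≤ #A := by
  apply card_le_card_of_injOn Prod.fst
  · intro p hp
    simp only [mem_coe, mem_filter, mem_product] at hp ⊢
    exact hp.1.1
  · rintro ⟨a, b⟩ hp ⟨c, d⟩ hq h
    simp only [mem_coe, mem_filter, mem_product] at hp hq h
    simp only [Prod.mk.injEq]
    exact ⟨h, by linarith [hp.2, hq.2]⟩

lemma dlt_le_card_right (A B : Finset ℝ) (s : ℝ) : dlt A B s ≤ #B :=
  dlt_eq_card_filter A B s ▸ card_filter_le _ _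

lemma StrictConvexOn.injective_translate_sub {f : ℝ → ℝ} (hf : StrictConvexOn ℝ Set.univ f)
    {x y : ℝ} (hxy : x ≠ y) : Function.Injective fun s => f (x + s) - f (y + s) := by
  have key : ∀ u v d : ℝ, u < v → 0 < d → f (u + d) + f v < f u + f (v + d) := by
    intro u v d huv hd
    have hw : 0 < v - u + d := by linarith
    have h1 : 0 < (v - u) / (v - u + d) := div_pos (by linarith) hw
    have h2 : 0 < d / (v - u + d) := div_pos hd hw
    have h3 : (v - u) / (v - u + d) + d / (v - u + d) = 1 := by
      rw [← add_div, div_self hw.ne']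
    have e1 := hf.2 (Set.mem_univ u) (Set.mem_univ (v + d)) (by linarith) h1 h2 h3
    have e2 := hf.2 (Set.mem_univ u) (Set.mem_univ (v + d)) (by linarith) h2 h1
      (by rw [add_comm, h3])
    have c1 : ((v - u) / (v - u + d)) • u + (d / (v - u + d)) • (v + d) = u + d := by
      simp only [smul_eq_mul]; field_simp; ring
    have c2 : (d / (v - u + d)) • u + ((v - u) / (v - u + d)) • (v + d) = v := by
      simp only [smul_eq_mul]; field_simp; ring
    rw [c1] at e1
    rw [c2] at e2
    simp only [smul_eq_mul] at e1 e2
    calc _ < _ := add_lt_add e1 e2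
      _ = ((v - u) / (v - u + d) + d / (v - u + d)) * (f u + f (v + d)) := by ring
      _ = _ := by rw [h3, one_mul]
  have key' : ∀ x y s t : ℝ, x < y → s < t →
      f (y + s) - f (x + s) < f (y + t) - f (x + t) := by
    intro x y s t h1 h2
    have := key (x + s) (x + t) (y - x) (by linarith) (by linarith)
    rw [show x + s + (y - x) = y + s by ring, show x + t + (y - x) = y + t by ring] at this
    linarith
  intro s t hst
  simp only at hst
  by_contra hne
  rcases lt_or_gt_of_ne hxy with h | h <;> rcases lt_or_gt_of_ne hne with h' | h'
  · linarith [key' _ _ _ _ h h']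
  · linarith [key' _ _ _ _ h h']
  · linarith [key' _ _ _ _ h h']
  · linarith [key' _ _ _ _ h h']

lemma card_rich_mul_le_of_monotoneOn {f : ℝ → ℝ}
    (hf : ∀ x y, x ≠ y → Function.Injective fun s => f (x + s) - f (y + s))
    {A : Finset ℝ} (hA : MonotoneOn f A) (hinj : Set.InjOn f A) (B C S : Finset ℝ) {τ : ℕ}
    (hτ : 0 < τ) (hS : ∀ s ∈ S, τ ≤ dlt A B s) :
    #S * #C * τ ^ 3 ≤ 512 * #B ^ 2 * #(A.image f + C) ^ 2 := by
  rcases S.eq_empty_or_nonempty with rfl | ⟨s, hs⟩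
  · simp
  rcases C.eq_empty_or_nonempty with rfl | hC
  · simp
  have hτA : τ ≤ #A := (hS s hs).trans (dlt_le_card_left _ _ _)
  have hτB : τ ≤ #B := (hS s hs).trans (dlt_le_card_right _ _ _)
  have hAM : #A ≤ #(A.image f + C) := by
    rw [← card_image_of_injOn hinj]
    exact card_le_card_add_right hC
  have hCM : #C ≤ #(A.image f + C) := by
    apply card_le_card_add_left
    rw [image_nonempty, ← card_pos]
    omega
  set M := #(A.image f + C)
  rcases lt_or_ge τ 4 with h4 | h4
  · have hSAB : #S ≤ #A * #B :=
      (card_le_card fun s hs => mem_sub_of_dlt_pos (hτ.trans_le (hS s hs))).trans (card_sub_le)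
    have hτ3 : τ ^ 3 ≤ 512 := by
      calc τ ^ 3 ≤ 4 ^ 3 := Nat.pow_le_pow_left h4.le 3
        _ ≤ 512 := by norm_num
    calc #S * #C * τ ^ 3 ≤ ((M * #B) * M) * 512 := by gcongr; exact hSAB.trans (by gcongr)
      _ = 512 * (#B * 1) * M ^ 2 := by ring
      _ ≤ 512 * (#B * #B) * M ^ 2 := by gcongr; omega
      _ = _ := by ring
  · obtain ⟨t, ht⟩ : ∃ t, t = τ / 4 := ⟨_, rfl⟩
    have h1 := card_rich_translates_le hf hA B C S (τ := τ) (t := t) (by omega)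
      (fun s hs => dlt_eq_card_filter A B s ▸ hS s hs)
    have h2 : τ ≤ 8 * t := by omega
    have h3 : τ ≤ 2 * (τ - 2 * t) := by omega
    calc #S * #C * τ ^ 3 = #S * #C * (τ * τ ^ 2) := by ring
      _ ≤ #S * #C * ((2 * (τ - 2 * t)) * (8 * t) ^ 2) := by gcongr
      _ = 128 * (#S * #C * (τ - 2 * t) * t ^ 2) := by ring
      _ ≤ 128 * (#B * (#B + t) * (M * (M + t))) := by gcongr
      _ ≤ 128 * (#B * (#B + #B) * (M * (M + M))) := by gcongr <;> omega
      _ = _ := by ring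

/-- The number of popular differences is controlled by the growth of a convex image. -/
lemma StrictConvexOn.card_popular_mul_le {f : ℝ → ℝ} (hf : StrictConvexOn ℝ Set.univ f)
    (A B C S : Finset ℝ) {τ : ℕ} (hτ : 0 < τ) (hS : ∀ s ∈ S, τ ≤ dlt A B s) :
    #S * #C * τ ^ 3 ≤ 8192 * #B ^ 2 * #(A.image f + C) ^ 2 := by
  classical
  have hinj := fun x y (h : x ≠ y) => hf.injective_translate_sub h
  let p : ℝ → Prop := fun x => ∃ y, x < y ∧ f y ≤ f x
  have hanti : StrictAntiOn f (A.filter p) := by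
    intro x _ x' hx' h
    obtain ⟨-, y, hy, hfy⟩ := mem_filter.1 hx'
    have := hf.lt_on_openSegment (Set.mem_univ x) (Set.mem_univ y) (by linarith)
      (z := x') (by rw [openSegment_eq_Ioo (by linarith)]; exact ⟨h, hy⟩)
    rcases lt_max_iff.1 this with h | h
    · exact h
    · linarith
  have hmono : StrictMonoOn f (A.filter (fun x => ¬ p x)) := by
    intro x hx y _ h
    by_contra h'
    exact (mem_filter.1 hx).2 ⟨y, h, not_lt.1 h'⟩
  obtain ⟨σ, hσ⟩ : ∃ σ, σ = (τ + 1) / 2 := ⟨_, rfl⟩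
  have hsum : ∀ s, dlt A B s = dlt (A.filter p) B s + dlt (A.filter (fun x => ¬ p x)) B s := by
    intro s
    simp only [dlt_eq_card_filter, mem_filter]
    rw [← card_filter_add_card_filter_not (s := B.filter (fun b => b + s ∈ A))
      (fun b => p (b + s)), filter_filter, filter_filter]
  have b1 : #(S.filter (fun s => σ ≤ dlt (A.filter p) B s)) * #C * σ ^ 3 ≤
      512 * #B ^ 2 * #(A.image f + C) ^ 2 := by
    have hneg : (A.filter p).image (fun x => -f x) + -C = -((A.filter p).image f + C) := by
      rw [neg_add]
      congr 1
      rw [← image_neg_eq_neg, image_image]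
      rfl
    have := card_rich_mul_le_of_monotoneOn (f := fun x => -f x) (A := A.filter p)
      (fun x y h s t hst => hinj x y h (by simp only at hst ⊢; linarith))
      hanti.antitoneOn.neg (fun x hx y hy h => hanti.injOn hx hy (neg_inj.1 h)) B (-C)
      (S.filter (fun s => σ ≤ dlt (A.filter p) B s)) (τ := σ) (by omega)
      (fun s hs => (mem_filter.1 hs).2)
    rw [hneg, card_neg, card_neg] at this
    exact this.trans (by gcongr; exact filter_subset _ _)
  have b2 : #(S.filter (fun s => ¬ σ ≤ dlt (A.filter p) B s)) * #C * σ ^ 3 ≤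
      512 * #B ^ 2 * #(A.image f + C) ^ 2 := by
    refine (card_rich_mul_le_of_monotoneOn hinj hmono.monotoneOn hmono.injOn B C _ (by omega)
      fun s hs => ?_).trans (by gcongr; exact filter_subset _ _)
    rw [mem_filter] at hs
    have h1 := hS s hs.1
    have h2 := hsum s
    omega
  calc #S * #C * τ ^ 3 ≤ #S * #C * (2 * σ) ^ 3 := by gcongr; omega
    _ = 8 * (#(S.filter (fun s => σ ≤ dlt (A.filter p) B s)) * #C * σ ^ 3 +
        #(S.filter (fun s => ¬ σ ≤ dlt (A.filter p) B s)) * #C * σ ^ 3) := by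
      rw [← card_filter_add_card_filter_not (s := S) (fun s => σ ≤ dlt (A.filter p) B s)]
      ring
    _ ≤ 8 * (512 * #B ^ 2 * #(A.image f + C) ^ 2 + 512 * #B ^ 2 * #(A.image f + C) ^ 2) := by
      gcongr
    _ = _ := by ring

lemma sum_cube_le_of_card_le {ι : Type*} (D : Finset ι) (g : ι → ℕ) {L : ℝ} {N : ℕ}
    (hN : ∀ s ∈ D, g s ≤ N)
    (hL : ∀ τ, 0 < τ → (#(D.filter (fun s => τ ≤ g s)) : ℝ) * (τ : ℝ) ^ 3 ≤ L) :
    ∑ s ∈ D, (g s : ℝ) ^ 3 ≤ 3 * L * (1 + Real.log N) := by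
  have hL0 : 0 ≤ L := le_trans (by positivity) (hL 1 one_pos)
  have hpt : ∀ n : ℕ, (n : ℝ) ^ 3 ≤ ∑ τ ∈ Icc 1 n, 3 * (τ : ℝ) ^ 2 := by
    intro n
    induction n with
    | zero => simp
    | succ k ih =>
      rw [sum_Icc_succ_top (by omega)]
      push_cast
      nlinarith [ih, (Nat.cast_nonneg k : (0 : ℝ) ≤ k)]
  have hH : ∑ τ ∈ Icc 1 N, (τ : ℝ)⁻¹ ≤ 1 + Real.log N := by
    have := harmonic_le_one_add_log N
    rw [harmonic_eq_sum_Icc] at this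
    push_cast at this
    exact this
  calc ∑ s ∈ D, (g s : ℝ) ^ 3
      ≤ ∑ s ∈ D, ∑ τ ∈ Icc 1 N, if τ ≤ g s then 3 * (τ : ℝ) ^ 2 else 0 := by
        refine sum_le_sum fun s hs => (hpt _).trans ?_
        rw [← sum_filter]
        refine sum_le_sum_of_subset_of_nonneg (fun τ hτ => ?_) fun _ _ _ => by positivity
        have := hN s hs
        simp only [mem_Icc, mem_filter] at hτ ⊢
        omega
    _ = ∑ τ ∈ Icc 1 N, (#(D.filter (fun s => τ ≤ g s)) : ℝ) * (3 * (τ : ℝ) ^ 2) := by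
        rw [sum_comm]
        refine sum_congr rfl fun τ _ => ?_
        rw [← sum_filter, sum_const, nsmul_eq_mul]
    _ ≤ ∑ τ ∈ Icc 1 N, 3 * L * (τ : ℝ)⁻¹ := by
        refine sum_le_sum fun τ hτ => ?_
        have hτ' : 0 < τ := (mem_Icc.1 hτ).1
        have hτ0 : (0 : ℝ) < τ := by exact_mod_cast hτ'
        have := hL τ hτ'
        rw [← div_eq_mul_inv, le_div_iff₀ hτ0]
        nlinarith
    _ = 3 * L * ∑ τ ∈ Icc 1 N, (τ : ℝ)⁻¹ := by rw [mul_sum]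
    _ ≤ _ := by gcongr

lemma sum_sq_filter_le_of_card_le {ι : Type*} (D : Finset ι) (g : ι → ℕ) {L : ℝ}
    (hL : ∀ τ, 0 < τ → (#(D.filter (fun s => τ ≤ g s)) : ℝ) * (τ : ℝ) ^ 3 ≤ L)
    {Δ : ℝ} (hΔ : 0 < Δ) :
    ∑ s ∈ D.filter (fun s => Δ < g s), (g s : ℝ) ^ 2 ≤ 3 * L / Δ := by
  have hL0 : 0 ≤ L := le_trans (by positivity) (hL 1 one_pos)
  obtain ⟨T, hT⟩ : ∃ T, T = ⌈Δ⌉₊ := ⟨_, rfl⟩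
  have hT0 : 0 < T := hT ▸ Nat.ceil_pos.2 hΔ
  have hTΔ : Δ ≤ T := hT ▸ Nat.le_ceil Δ
  have hTr : (0 : ℝ) < T := by exact_mod_cast hT0
  obtain ⟨N, hN⟩ : ∃ N, N = max T (D.sup g) := ⟨_, rfl⟩
  have hgN : ∀ s ∈ D, g s ≤ N := fun s hs => hN ▸ (le_sup hs).trans (le_max_right _ _)
  have hTN : T ≤ N := hN ▸ le_max_left _ _
  have hpt : ∀ n : ℕ, T ≤ n → (n : ℝ) ^ 2 ≤ (T : ℝ) ^ 2 + ∑ τ ∈ Ioc T n, 2 * (τ : ℝ) := by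
    intro n hn
    induction n, hn using Nat.le_induction with
    | base => simp
    | succ k hk ih =>
      rw [sum_Ioc_succ_top hk]
      push_cast
      nlinarith [ih]
  calc ∑ s ∈ D.filter (fun s => Δ < g s), (g s : ℝ) ^ 2
      ≤ ∑ s ∈ D.filter (fun s => T ≤ g s), (g s : ℝ) ^ 2 := by
        refine sum_le_sum_of_subset_of_nonneg
          (monotone_filter_right _ fun s _ h => ?_) fun _ _ _ => by positivity
        rw [hT]
        exact Nat.ceil_le.2 (le_of_lt h)
    _ ≤ ∑ s ∈ D.filter (fun s => T ≤ g s),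
          ((T : ℝ) ^ 2 + ∑ τ ∈ Ioc T N, if τ ≤ g s then 2 * (τ : ℝ) else 0) := by
        refine sum_le_sum fun s hs => (hpt _ (mem_filter.1 hs).2).trans ?_
        rw [← sum_filter]
        gcongr
        intro τ hτ
        have := hgN s (mem_filter.1 hs).1
        simp only [mem_Ioc, mem_filter] at hτ ⊢
        omega
    _ ≤ #(D.filter (fun s => T ≤ g s)) * (T : ℝ) ^ 2 +
          ∑ τ ∈ Ioc T N, (#(D.filter (fun s => τ ≤ g s)) : ℝ) * (2 * (τ : ℝ)) := by
        rw [sum_add_distrib, sum_const, nsmul_eq_mul, sum_comm]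
        gcongr with τ hτ
        rw [← sum_filter, sum_const, nsmul_eq_mul]
        gcongr
        exact filter_subset _ _
    _ ≤ L / T + ∑ τ ∈ Ioc T N, 2 * L * ((τ : ℝ) ^ 2)⁻¹ := by
        refine add_le_add ?_ (sum_le_sum fun τ hτ => ?_)
        · rw [le_div_iff₀ hTr]
          linarith [hL T hT0]
        · have hτ' : 0 < τ := hT0.trans (mem_Ioc.1 hτ).1
          have hτ0 : (0 : ℝ) < τ := by exact_mod_cast hτ'
          have := hL τ hτ'
          rw [← div_eq_mul_inv, le_div_iff₀ (by positivity)]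
          nlinarith
    _ ≤ L / T + 2 * L * (T : ℝ)⁻¹ := by
        rw [← mul_sum]
        gcongr
        refine (sum_Ioc_inv_sq_le_sub hT0.ne' hTN).trans ?_
        simp
    _ = 3 * L / T := by ring
    _ ≤ 3 * L / Δ := by gcongr

lemma addEnergy_eq_sum_dlt_sq (A B : Finset ℝ) :
    A.addEnergy B = ∑ s ∈ A - B, dlt A B s ^ 2 := by
  rw [addEnergy, card_eq_sum_card_fiberwise (f := fun x => x.1.1 - x.2.2) (t := A - B)]
  · refine sum_congr rfl fun s _ => ?_
    rw [sq, dlt, ← card_product]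
    apply card_nbij' (fun x => ((x.1.1, x.2.2), (x.1.2, x.2.1)))
      (fun y => ((y.1.1, y.2.1), (y.2.2, y.1.2)))
    · rintro ⟨⟨a, a'⟩, b, b'⟩ h
      simp only [coe_filter, coe_product, mem_filter, mem_product, Set.mem_prod,
        Set.mem_ofPred_eq] at h ⊢
      exact ⟨⟨⟨h.1.1.1.1, h.1.1.2.2⟩, h.2⟩, ⟨h.1.1.1.2, h.1.1.2.1⟩, by linarith [h.1.2, h.2]⟩
    · rintro ⟨⟨a, b'⟩, a', b⟩ h
      simp only [coe_filter, coe_product, mem_filter, mem_product, Set.mem_prod,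
        Set.mem_ofPred_eq] at h ⊢
      exact ⟨⟨⟨⟨h.1.1.1, h.2.1.1⟩, h.2.1.2, h.1.1.2⟩, by linarith [h.1.2, h.2.2]⟩, h.1.2⟩
    · intro _ _; rfl
    · intro _ _; rfl
  · rintro ⟨⟨a, a'⟩, b, b'⟩ h
    simp only [coe_filter, mem_product, Set.mem_ofPred_eq] at h
    exact sub_mem_sub h.1.1.1 h.1.2.2

lemma addEnergy_eq_sum_dlt_mul (A B : Finset ℝ) :
    A.addEnergy B = ∑ s ∈ A - A, dlt A A s * dlt B B s := by
  rw [addEnergy, card_eq_sum_card_fiberwise (f := fun x => x.1.1 - x.1.2) (t := A - A)]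
  · refine sum_congr rfl fun s _ => ?_
    rw [dlt, dlt, ← card_product]
    apply card_nbij' (fun x => ((x.1.1, x.1.2), (x.2.2, x.2.1)))
      (fun y => ((y.1.1, y.1.2), (y.2.2, y.2.1)))
    · rintro ⟨⟨a, a'⟩, b, b'⟩ h
      simp only [coe_filter, coe_product, mem_filter, mem_product, Set.mem_prod,
        Set.mem_ofPred_eq] at h ⊢
      exact ⟨⟨h.1.1.1, h.2⟩, ⟨h.1.1.2.2, h.1.1.2.1⟩, by linarith [h.1.2, h.2]⟩
    · rintro ⟨⟨a, a'⟩, b', b⟩ h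
      simp only [coe_filter, coe_product, mem_filter, mem_product, Set.mem_prod,
        Set.mem_ofPred_eq] at h ⊢
      exact ⟨⟨⟨h.1.1, h.2.1.2, h.2.1.1⟩, by linarith [h.1.2, h.2.2]⟩, h.1.2⟩
    · intro _ _; rfl
    · intro _ _; rfl
  · rintro ⟨⟨a, a'⟩, b, b'⟩ h
    simp only [coe_filter, mem_product, Set.mem_ofPred_eq] at h
    exact sub_mem_sub h.1.1.1 h.1.1.2

/-- The elements of `A` that stay in `A` after translation by `s`. -/
noncomputable def translateInter (A : Finset ℝ) (s : ℝ) : Finset ℝ :=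
  A.filter (fun b => b + s ∈ A)

lemma card_translateInter (A : Finset ℝ) (s : ℝ) : #(translateInter A s) = dlt A A s :=
  (dlt_eq_card_filter A A s).symm

/-- The Katz–Koester inclusion. -/
lemma card_add_translateInter_le (A : Finset ℝ) (s : ℝ) :
    #(A + translateInter A s) ≤ dlt (A + A) (A + A) s := by
  rw [dlt_eq_card_filter]
  apply card_le_card
  intro x hx
  obtain ⟨a, ha, b, hb, rfl⟩ := mem_add.1 hx
  have hb := mem_filter.1 hb
  rw [mem_filter, add_assoc]
  exact ⟨add_mem_add ha hb.1, add_mem_add ha hb.2⟩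

lemma sum_addEnergy_translateInter_le (A : Finset ℝ) :
    ∑ s ∈ A - A, A.addEnergy (translateInter A s) ≤ ∑ s ∈ A - A, dlt A A s ^ 3 := by
  simp_rw [addEnergy_eq_sum_dlt_mul]
  rw [sum_comm]
  refine sum_le_sum fun x _ => ?_
  rw [← mul_sum, pow_succ', sq]
  refine Nat.mul_le_mul_left _ ?_
  unfold dlt
  rw [← card_sigma, ← card_product]
  apply card_le_card_of_injOn (fun z => (z.2, (z.2.1 + z.1, z.2.2 + z.1)))
  · rintro ⟨s, u, v⟩ h
    simp only [coe_sigma, Set.mem_sigma_iff, mem_coe, mem_filter, mem_product,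
      translateInter] at h ⊢
    obtain ⟨-, ⟨⟨hu, hus⟩, hv, hvs⟩, rfl⟩ := h
    exact ⟨⟨⟨hu, hv⟩, rfl⟩, ⟨hus, hvs⟩, by ring⟩
  · rintro ⟨s, u, v⟩ - ⟨s', u', v'⟩ - h
    simp only [Prod.mk.injEq] at h
    obtain ⟨⟨rfl, rfl⟩, h, -⟩ := h
    obtain rfl := add_left_cancel h
    rfl

/-- The Schoen–Shkredov inequality. -/
lemma sq_card_mul_sq_sum_le (A : Finset ℝ) :
    (#A : ℝ) ^ 2 * (∑ s ∈ A - A, (dlt A A s : ℝ) * √(dlt A A s)) ^ 2 ≤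
      (A.addEnergy (A + A) : ℝ) * ∑ s ∈ A - A, (dlt A A s : ℝ) ^ 3 := by
  rw [← mul_pow, mul_sum]
  refine (sum_sq_le_sum_mul_sum_of_sq_le_mul (A - A)
    (f := fun s => (dlt A A s : ℝ) * dlt (A + A) (A + A) s)
    (g := fun s => (A.addEnergy (translateInter A s) : ℝ))
    (fun _ _ => by positivity) (fun _ _ => by positivity) fun s _ => ?_).trans ?_
  · have h1 := le_card_add_mul_addEnergy A (translateInter A s)
    have h2 := card_add_translateInter_le A s
    rw [card_translateInter] at h1
    have h3 : (#A : ℝ) ^ 2 * (dlt A A s : ℝ) ^ 2 ≤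
        dlt (A + A) (A + A) s * A.addEnergy (translateInter A s) := by
      exact_mod_cast h1.trans (Nat.mul_le_mul_right _ h2)
    calc ((#A : ℝ) * ((dlt A A s : ℝ) * √(dlt A A s))) ^ 2
        = (#A : ℝ) ^ 2 * (dlt A A s : ℝ) ^ 2 * √(dlt A A s) ^ 2 := by ring
      _ = (#A : ℝ) ^ 2 * (dlt A A s : ℝ) ^ 2 * dlt A A s := by
        rw [Real.sq_sqrt (Nat.cast_nonneg _)]
      _ ≤ dlt (A + A) (A + A) s * A.addEnergy (translateInter A s) * dlt A A s := by gcongr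
      _ = _ := by ring
  · refine mul_le_mul ?_ ?_ (by positivity) (by positivity)
    · exact_mod_cast (addEnergy_eq_sum_dlt_mul A (A + A)).ge
    · exact_mod_cast sum_addEnergy_translateInter_le A

section Popular

variable {ι : Type*} {D : Finset ι} {g : ι → ℕ} {L : ℝ}

lemma half_sum_sq_le_of_card_le (hL0 : 0 < L)
    (hL : ∀ τ, 0 < τ → (#(D.filter (fun s => τ ≤ g s)) : ℝ) * (τ : ℝ) ^ 3 ≤ L)
    {Q : ℝ} (hQ : ∑ s ∈ D, (g s : ℝ) ^ 2 = Q) (hQ0 : 0 < Q) :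
    Q / 2 ≤ ∑ s ∈ D.filter (fun s => ¬ 6 * L / Q < g s), (g s : ℝ) ^ 2 := by
  have h1 := sum_sq_filter_le_of_card_le D g hL (Δ := 6 * L / Q) (by positivity)
  have h2 := sum_filter_add_sum_filter_not D (fun s => 6 * L / Q < g s)
    (fun s => (g s : ℝ) ^ 2)
  have h3 : 3 * L / (6 * L / Q) = Q / 2 := by field_simp; norm_num
  linarith

lemma sq_sum_sq_le_of_card_le (hL0 : 0 < L)
    (hL : ∀ τ, 0 < τ → (#(D.filter (fun s => τ ≤ g s)) : ℝ) * (τ : ℝ) ^ 3 ≤ L) :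
    (∑ s ∈ D, (g s : ℝ) ^ 2) ^ 2 ≤ 12 * L * ∑ s ∈ D, (g s : ℝ) := by
  obtain ⟨Q, hQ⟩ : ∃ Q, ∑ s ∈ D, (g s : ℝ) ^ 2 = Q := ⟨_, rfl⟩
  have hQ0 : 0 ≤ Q := hQ ▸ sum_nonneg fun _ _ => by positivity
  rw [hQ]
  rcases hQ0.eq_or_lt with h | h
  · rw [← h]
    have : 0 ≤ ∑ s ∈ D, (g s : ℝ) := sum_nonneg fun _ _ => by positivity
    simp only [ne_eq, OfNat.ofNat_ne_zero, not_false_eq_true, zero_pow]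
    positivity
  have h1 : ∑ s ∈ D.filter (fun s => ¬ 6 * L / Q < g s), (g s : ℝ) ^ 2 ≤
      6 * L / Q * ∑ s ∈ D, (g s : ℝ) := by
    rw [mul_sum]
    refine (sum_le_sum fun s hs => ?_).trans
      (sum_le_sum_of_subset_of_nonneg (filter_subset _ _) fun _ _ _ => by positivity)
    have := not_lt.1 (mem_filter.1 hs).2
    rw [sq]
    gcongr
  have h2 := (half_sum_sq_le_of_card_le hL0 hL hQ h).trans h1
  rw [div_mul_eq_mul_div, le_div_iff₀ h] at h2
  linarith

lemma cube_sum_sq_le_of_card_le (hL0 : 0 < L)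
    (hL : ∀ τ, 0 < τ → (#(D.filter (fun s => τ ≤ g s)) : ℝ) * (τ : ℝ) ^ 3 ≤ L) :
    (∑ s ∈ D, (g s : ℝ) ^ 2) ^ 3 ≤ 24 * L * (∑ s ∈ D, (g s : ℝ) * √(g s)) ^ 2 := by
  obtain ⟨Q, hQ⟩ : ∃ Q, ∑ s ∈ D, (g s : ℝ) ^ 2 = Q := ⟨_, rfl⟩
  have hQ0 : 0 ≤ Q := hQ ▸ sum_nonneg fun _ _ => by positivity
  rw [hQ]
  rcases hQ0.eq_or_lt with h | h
  · rw [← h]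
    simp only [ne_eq, OfNat.ofNat_ne_zero, not_false_eq_true, zero_pow]
    positivity
  have h1 : ∑ s ∈ D.filter (fun s => ¬ 6 * L / Q < g s), (g s : ℝ) ^ 2 ≤
      √(6 * L / Q) * ∑ s ∈ D, (g s : ℝ) * √(g s) := by
    rw [mul_sum]
    refine (sum_le_sum fun s hs => ?_).trans
      (sum_le_sum_of_subset_of_nonneg (filter_subset _ _) fun _ _ _ => by positivity)
    have := not_lt.1 (mem_filter.1 hs).2
    calc (g s : ℝ) ^ 2 = √(g s) * ((g s : ℝ) * √(g s)) := by
          nth_rewrite 1 [sq, ← Real.mul_self_sqrt (Nat.cast_nonneg (g s) : (0 : ℝ) ≤ g s)]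
          ring
      _ ≤ _ := by gcongr
  have h2 := (half_sum_sq_le_of_card_le hL0 hL hQ h).trans h1
  have h3 := pow_le_pow_left₀ (by positivity) h2 2
  rw [mul_pow, Real.sq_sqrt (by positivity), div_mul_eq_mul_div, le_div_iff₀ h] at h3
  linarith

end Popular

lemma sum_dlt (A B : Finset ℝ) : ∑ s ∈ A - B, dlt A B s = #A * #B := by
  rw [← card_product]
  exact (card_eq_sum_card_fiberwise fun p hp =>
    sub_mem_sub (mem_product.1 hp).1 (mem_product.1 hp).2).symm

lemma StrictConvexOn.card_popular_mul_le_div {f : ℝ → ℝ} (hf : StrictConvexOn ℝ Set.univ f)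
    (A B C D : Finset ℝ) (hA : 0 < #A) (hC : (#A : ℝ) / 2 ≤ #C) (τ : ℕ) (hτ : 0 < τ) :
    (#(D.filter (fun s => τ ≤ dlt A B s)) : ℝ) * (τ : ℝ) ^ 3 ≤
      16384 * (#B : ℝ) ^ 2 * (#(A.image f + C) : ℝ) ^ 2 / #A := by
  have h : (#(D.filter (fun s => τ ≤ dlt A B s)) : ℝ) * #C * (τ : ℝ) ^ 3 ≤
      8192 * (#B : ℝ) ^ 2 * (#(A.image f + C) : ℝ) ^ 2 := by
    exact_mod_cast hf.card_popular_mul_le A B C _ hτ fun s hs => (mem_filter.1 hs).2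
  have hA' : (0 : ℝ) < #A := by exact_mod_cast hA
  rw [le_div_iff₀ hA']
  calc _ ≤ (#(D.filter (fun s => τ ≤ dlt A B s)) : ℝ) * (τ : ℝ) ^ 3 * (2 * #C) := by
        gcongr; linarith
    _ = 2 * ((#(D.filter (fun s => τ ≤ dlt A B s)) : ℝ) * #C * (τ : ℝ) ^ 3) := by ring
    _ ≤ 2 * (8192 * (#B : ℝ) ^ 2 * (#(A.image f + C) : ℝ) ^ 2) := by gcongr
    _ = _ := by ring

lemma one_add_log_le {x : ℝ} (hx : 2 ≤ x) : 1 + Real.log x ≤ 3 * Real.log x := by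
  have := Real.log_two_gt_d9
  have := Real.log_le_log two_pos hx
  linarith

/-- Combines the moment bounds for the difference representation function, where `E`, `Q`, `G`,
`F` stand for the energies `E(A)`, `E(A, A + A)`, `E₃(A)`, `E_{3/2}(A)`. -/
lemma combine_energy_bounds {k N P M l E Q F G : ℝ} (hk : 0 < k) (hN : 0 < N) (hM : 0 < M)
    (hP : 0 ≤ P) (hE0 : 0 ≤ E) (hG0 : 0 ≤ G)
    (hE : N ^ 4 ≤ P * E) (hQ : Q ^ 2 ≤ 12 * (k * P ^ 2 * M ^ 2 / N) * (N * P))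
    (hG : G ≤ 3 * (k * N ^ 2 * M ^ 2 / N) * (3 * l))
    (hEF : E ^ 3 ≤ 24 * (k * N ^ 2 * M ^ 2 / N) * F ^ 2) (hF : N ^ 2 * F ^ 2 ≤ Q * G) :
    N ^ 24 ≤ 559872 * k ^ 5 * (M ^ 10 * P ^ 9 * l ^ 2) := by
  have hQ' : Q ^ 2 ≤ 12 * k * P ^ 3 * M ^ 2 := hQ.trans_eq (by field_simp)
  have hG' : G ≤ 9 * k * N * M ^ 2 * l := hG.trans_eq (by field_simp; ring)
  have hEF' : E ^ 3 ≤ 24 * k * N * M ^ 2 * F ^ 2 := hEF.trans_eq (by field_simp)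
  have h1 : N ^ 2 * E ^ 3 ≤ 24 * k * N * M ^ 2 * (Q * G) :=
    calc N ^ 2 * E ^ 3 ≤ N ^ 2 * (24 * k * N * M ^ 2 * F ^ 2) := by gcongr
      _ = 24 * k * N * M ^ 2 * (N ^ 2 * F ^ 2) := by ring
      _ ≤ _ := by gcongr
  have h2 : N ^ 4 * E ^ 6 ≤ N ^ 4 * (559872 * k ^ 5 * (M ^ 10 * P ^ 3 * l ^ 2)) :=
    calc N ^ 4 * E ^ 6 = (N ^ 2 * E ^ 3) ^ 2 := by ring
      _ ≤ (24 * k * N * M ^ 2 * (Q * G)) ^ 2 := by gcongr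
      _ = 576 * k ^ 2 * N ^ 2 * M ^ 4 * (Q ^ 2 * G ^ 2) := by ring
      _ ≤ 576 * k ^ 2 * N ^ 2 * M ^ 4 *
          ((12 * k * P ^ 3 * M ^ 2) * (9 * k * N * M ^ 2 * l) ^ 2) := by gcongr
      _ = _ := by ring
  have h3 := le_of_mul_le_mul_left h2 (by positivity)
  calc N ^ 24 = (N ^ 4) ^ 6 := by ring
    _ ≤ (P * E) ^ 6 := by gcongr
    _ = P ^ 6 * E ^ 6 := by ring
    _ ≤ P ^ 6 * (559872 * k ^ 5 * (M ^ 10 * P ^ 3 * l ^ 2)) := by gcongr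
    _ = _ := by ring

theorem stmt13 : ∃ K : ℝ, 0 < K ∧
    ∀ f : ℝ → ℝ, Continuous f → StrictConvexOn ℝ Set.univ f →
    ∀ A C : Finset ℝ, (A.card : ℝ) / 2 ≤ (C.card : ℝ) → (C.card : ℝ) ≤ 2 * (A.card : ℝ) →
    2 ≤ A.card →
    ((A.image f + C).card : ℝ) ^ 10 * ((A + A).card : ℝ) ^ 9 ≥
      K * (A.card : ℝ) ^ 24 / (Real.log A.card) ^ 2 := by
  refine ⟨(559872 * 16384 ^ 5)⁻¹, by positivity, ?_⟩
  intro f _ hf A C hC _ hA2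
  have hA : 0 < #A := by omega
  have hA' : (0 : ℝ) < #A := by exact_mod_cast hA
  have hA2' : (2 : ℝ) ≤ #A := by exact_mod_cast hA2
  have hAne : A.Nonempty := card_pos.1 hA
  have hCne : C.Nonempty := card_pos.1 (by
    have : (0 : ℝ) < #C := by linarith
    exact_mod_cast this)
  have hM : (0 : ℝ) < #(A.image f + C) := by
    exact_mod_cast card_pos.2 ((hAne.image f).add hCne)
  have hP : (0 : ℝ) < #(A + A) := by exact_mod_cast card_pos.2 (hAne.add hAne)
  have hl : 0 < Real.log #A := Real.log_pos (by linarith)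
  have hLA := hf.card_popular_mul_le_div A A C (A - A) hA hC
  have hLB := hf.card_popular_mul_le_div A (A + A) C (A - (A + A)) hA hC
  have key := combine_energy_bounds (k := 16384) (N := #A) (P := #(A + A))
    (M := #(A.image f + C)) (l := Real.log #A)
    (E := ∑ s ∈ A - A, (dlt A A s : ℝ) ^ 2)
    (Q := ∑ s ∈ A - (A + A), (dlt A (A + A) s : ℝ) ^ 2)
    (F := ∑ s ∈ A - A, (dlt A A s : ℝ) * √(dlt A A s))
    (G := ∑ s ∈ A - A, (dlt A A s : ℝ) ^ 3) (by norm_num) hA' hM hP.le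
    (by positivity) (by positivity)
    (by
      have h1 := le_card_add_mul_addEnergy A A
      rw [addEnergy_eq_sum_dlt_sq] at h1
      have h2 : (#A : ℝ) ^ 2 * (#A : ℝ) ^ 2 ≤
          #(A + A) * ∑ s ∈ A - A, (dlt A A s : ℝ) ^ 2 := by exact_mod_cast h1
      linarith)
    (by
      have h1 := sq_sum_sq_le_of_card_le (by positivity) hLB
      have h2 : ∑ s ∈ A - (A + A), (dlt A (A + A) s : ℝ) = #A * #(A + A) := by
        exact_mod_cast sum_dlt A (A + A)
      rwa [h2] at h1)
    ((sum_cube_le_of_card_le _ _ (fun s _ => dlt_le_card_left A A s) hLA).trans (by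
      gcongr
      exact one_add_log_le hA2'))
    (cube_sum_sq_le_of_card_le (by positivity) hLA)
    (by
      have h1 := sq_card_mul_sq_sum_le A
      rw [addEnergy_eq_sum_dlt_sq] at h1
      exact_mod_cast h1)
  rw [ge_iff_le, div_le_iff₀ (by positivity), inv_mul_le_iff₀ (by positivity)]
  linarith
end
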